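/- arXiv:2112.10268 — 2 statements merged into one kernel-verified Lean document; each statement's English description precedes it below -/
import Mathlib

section
/- In the field F_{2^6} (the finite field with 64 elements, an extension of F_2), there is no nonzero element ξ such that Tr(ξ) = 0, Tr(ξ^{-1}) = 0, and ξ + ξ^{-1} is a primitive element of F_{2^6}. -/
lemma key_aux {E : Type*} [Field E] (x : E) (h2 : (2 : E) = 0)
    (hA : x^31 + x^15 + x^7 + x^3 + x + 1 = 0)
    (hB : x^31 + x^30 + x^28 + x^24 + x^16 + 1 = 0) :
    x^16 + x^9 + x^7 + 1 = 0 := by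
  linear_combination (x^1 + x^8 + x^10 + x^17) * hA +
    (x^0 + x^1 + x^2 + x^4 + x^7 + x^10 + x^13 + x^15 + x^16 + x^17) * hB +
    ((-1)*x^1 + (-1)*x^2 + (-1)*x^4 + (-1)*x^8 + (-1)*x^10 + (-1)*x^11 + (-1)*x^13 + (-1)*x^15 + (-1)*x^16 + (-2)*x^17 + (-1)*x^18 + (-1)*x^20 + (-1)*x^23 + (-1)*x^24 + (-1)*x^25 + (-1)*x^26 + (-1)*x^28 + (-1)*x^29 + (-1)*x^30 + (-2)*x^31 + (-3)*x^32 + (-1)*x^33 + (-1)*x^34 + (-1)*x^35 + (-1)*x^37 + (-1)*x^38 + (-1)*x^39 + (-1)*x^40 + (-2)*x^41 + (-1)*x^43 + (-1)*x^44 + (-1)*x^45 + (-1)*x^46 + (-1)*x^47 + (-1)*x^48) * h2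

lemma trace_aux (E : Type*) [Field E] [Fintype E] [Algebra (ZMod 2) E]
    (hE : Fintype.card E = 64) (x : E) (h : Algebra.trace (ZMod 2) E x = 0) :
    x + x^2 + x^4 + x^8 + x^16 + x^32 = 0 := by
  have hr : Module.finrank (ZMod 2) E = 6 := by
    have := Module.card_eq_pow_finrank (K := ZMod 2) (V := E)
    rw [hE, ZMod.card] at this
    exact (Nat.pow_right_injective (le_refl 2) (by simpa using this)).symm
  have := FiniteField.algebraMap_trace_eq_sum_pow (ZMod 2) E x
  rw [h, hr] at this
  simp [Finset.sum_range_succ, ZMod.card] at this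
  linear_combination -this

/-- In `F_{2^6}` (the field with 64 elements, an extension of `F_2`) there is no
nonzero `ξ` with `Tr ξ = 0`, `Tr ξ⁻¹ = 0` and `ξ + ξ⁻¹` a primitive element
(i.e. of multiplicative order `63`). -/
theorem stmt1 (E : Type*) [Field E] [Fintype E] [Algebra (ZMod 2) E]
    (hE : Fintype.card E = 64) :
    ¬ ∃ ξ : E, ξ ≠ 0 ∧ Algebra.trace (ZMod 2) E ξ = 0 ∧
      Algebra.trace (ZMod 2) E ξ⁻¹ = 0 ∧ orderOf (ξ + ξ⁻¹) = 63 := by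
  rintro ⟨x, hx, h1, h2, ho⟩
  haveI : CharP E 2 := charP_of_injective_algebraMap (algebraMap (ZMod 2) E).injective 2
  have t0 : (2 : E) = 0 := CharTwo.two_eq_zero
  have a1 := trace_aux E hE x h1
  have a2 := trace_aux E hE x⁻¹ h2
  have hxi : x * x⁻¹ = 1 := mul_inv_cancel₀ hx
  have hA : x^31 + x^15 + x^7 + x^3 + x + 1 = 0 := by
    apply mul_left_cancel₀ hx
    linear_combination a1
  have hB : x^31 + x^30 + x^28 + x^24 + x^16 + 1 = 0 := by
    field_simp at a2
    linear_combination a2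
  have hW := key_aux x t0 hA hB
  have hy8 : (x + x⁻¹)^8 = x + x⁻¹ := by
    have e : (x + x⁻¹)^8 = x^8 + x⁻¹^8 := add_pow_char_pow (p := 2) (n := 3) x x⁻¹
    rw [e]
    field_simp
    linear_combination hW - (x^7 + x^9) * t0
  have hy0 : x + x⁻¹ ≠ 0 := by
    intro h
    rw [h, orderOf_zero] at ho
    omega
  have hy7 : (x + x⁻¹)^7 = 1 := by
    apply mul_left_cancel₀ hy0
    linear_combination hy8
  have := orderOf_dvd_of_pow_eq_one hy7
  rw [ho] at this
  omega
end

section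
/- Let q be a prime power, n a positive integer, a, b elements of F_q, and e a divisor of q^n − 1. Then N_e(a,b) ≥ θ(e)·q^{n/2}·(q^{n/2 − 2} − 2^{ω(e)+2}). -/
/-- A nonzero element `ξ` is `e`-free if the only divisor `d` of `e` for which
`ξ = β ^ d` is solvable is `d = 1`. -/
def IsFree {E : Type*} [Monoid E] (e : ℕ) (ξ : E) : Prop :=
  ∀ d : ℕ, d ∣ e → (∃ β : E, β ^ d = ξ) → d = 1

/-- `Ncount F E a b e` is the number of nonzero `ξ ∈ E` with `Tr ξ = a`,
`Tr ξ⁻¹ = b` and `ξ + ξ⁻¹` being `e`-free. -/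
noncomputable def Ncount (F E : Type*) [Field F] [Field E] [Algebra F E]
    (a b : F) (e : ℕ) : ℕ :=
  Nat.card {ξ : E // ξ ≠ 0 ∧ Algebra.trace F E ξ = a ∧ Algebra.trace F E ξ⁻¹ = b ∧
    IsFree e (ξ + ξ⁻¹)}

section Helpers
open Polynomial
set_option linter.unusedSectionVars false

/-- The function field data used in the Stepanov-Bombieri argument. -/
structure IsCurve {K E Γ : Type*} [Field K] [Field E] [Algebra K E]
    [LinearOrderedCommGroupWithZero Γ] (v : Valuation E Γ) (x y z : E) (d P : ℕ) (U V : K) :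
    Prop where
  hK : ∀ c : K, c ≠ 0 → v (algebraMap K E c) = 1
  hx : 1 < v x
  hy : y ^ d = x + x⁻¹
  hz : z ^ P = z + algebraMap K E U * x + algebraMap K E V * x⁻¹
  hU : U ≠ 0
  hd : 0 < d
  hP : 1 < P
  hc : Nat.Coprime d P

namespace IsCurve
variable {K E Γ : Type*} [Field K] [Field E] [Algebra K E]
    [LinearOrderedCommGroupWithZero Γ] {v : Valuation E Γ} {x y z : E} {d P : ℕ} {U V : K}

lemma x_ne (h : IsCurve v x y z d P U V) : x ≠ 0 := by
  rintro rfl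
  have := h.hx
  simp at this

lemma vinv (h : IsCurve v x y z d P U V) : v x⁻¹ < 1 := by
  rw [map_inv₀]
  exact inv_lt_one_of_one_lt₀ h.hx

lemma vy (h : IsCurve v x y z d P U V) : v y ^ d = v x := by
  rw [← map_pow, h.hy]
  exact Valuation.map_add_eq_of_lt_left _ (h.vinv.trans h.hx)

lemma vK_le (h : IsCurve v x y z d P U V) (c : K) : v (algebraMap K E c) ≤ 1 := by
  by_cases hc : c = 0
  · simp [hc]
  · exact (h.hK c hc).le

lemma vz (h : IsCurve v x y z d P U V) : v z ^ P = v x := by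
  have h1 : v (algebraMap K E U * x + algebraMap K E V * x⁻¹) = v x := by
    rw [Valuation.map_add_eq_of_lt_left]
    · rw [map_mul, h.hK _ h.hU, one_mul]
    · rw [map_mul, map_mul, h.hK _ h.hU, one_mul]
      calc v (algebraMap K E V) * v x⁻¹ ≤ 1 * v x⁻¹ := by gcongr; exact h.vK_le V
        _ < v x := by rw [one_mul]; exact h.vinv.trans h.hx
  have hz := h.hz
  rw [add_assoc] at hz
  have hvz : 1 < v z := by
    by_contra hcon
    push Not at hcon
    have h2 : v (z ^ P - z) ≤ 1 := by
      apply Valuation.map_sub_le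
      · rw [map_pow]; exact pow_le_one₀ zero_le hcon
      · exact hcon
    rw [hz, add_sub_cancel_left, h1] at h2
    exact absurd h.hx (not_lt.mpr h2)
  have h3 : v z < v (z ^ P) := by
    rw [map_pow]
    calc v z = v z ^ 1 := (pow_one _).symm
      _ < v z ^ P := pow_lt_pow_right₀ hvz h.hP
  have h4 : v (z ^ P - z) = v (z ^ P) := Valuation.map_sub_eq_of_lt_left _ h3
  rw [← map_pow, ← h4, hz, add_sub_cancel_left, h1]

/-- degree of a monomial -/
def dg (d P : ℕ) (i a b : ℕ) : ℕ := d * P * i + P * a + d * b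

lemma vmon (h : IsCurve v x y z d P U V) (i a b : ℕ) :
    v (x ^ i * y ^ a * z ^ b) ^ (d * P) = v x ^ dg d P i a b := by
  have e1 : v (x ^ i * y ^ a * z ^ b) ^ (d * P) =
      (v x) ^ (d * P * i) * ((v y) ^ d) ^ (P * a) * ((v z) ^ P) ^ (d * b) := by
    simp only [map_mul, map_pow, mul_pow]
    simp only [← pow_mul]
    rw [mul_comm i, show a * (d * P) = d * (P * a) by ring,
      show b * (d * P) = P * (d * b) by ring]
  rw [e1, h.vy, h.vz, dg, pow_add, pow_add]

lemma dg_inj (h : IsCurve v x y z d P U V) {i a b i' a' b' : ℕ} (ha : a < d) (ha' : a' < d)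
    (hb : b < P) (hb' : b' < P) (hh : dg d P i a b = dg d P i' a' b') :
    i = i' ∧ a = a' ∧ b = b' := by
  have hd := h.hd
  have hP := h.hP
  unfold dg at hh
  have h1 : a = a' := by
    have : P * a ≡ P * a' [MOD d] := by
      have e : (d * P * i + P * a + d * b) % d = (d * P * i' + P * a' + d * b') % d := by rw [hh]
      have e1 : ∀ i a b, (d * P * i + P * a + d * b) = P * a + d * (P * i + b) := by
        intros; ring
      rw [e1, e1, Nat.add_mul_mod_self_left, Nat.add_mul_mod_self_left] at e
      exact e
    have := Nat.ModEq.cancel_left_of_coprime h.hc this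
    exact Nat.ModEq.eq_of_lt_of_lt this ha ha'
  have h2 : b = b' := by
    have : d * b ≡ d * b' [MOD P] := by
      have e : (d * P * i + P * a + d * b) % P = (d * P * i' + P * a' + d * b') % P := by rw [hh]
      have e1 : ∀ i a b, (d * P * i + P * a + d * b) = d * b + P * (d * i + a) := by
        intros; ring
      rw [e1, e1, Nat.add_mul_mod_self_left, Nat.add_mul_mod_self_left] at e
      exact e
    have := Nat.ModEq.cancel_left_of_coprime h.hc.symm this
    exact Nat.ModEq.eq_of_lt_of_lt this hb hb'
  subst h1 h2
  refine ⟨?_, rfl, rfl⟩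
  have : d * P * i = d * P * i' := by omega
  exact Nat.eq_of_mul_eq_mul_left (by positivity) this

lemma dg_lt {i a b N : ℕ} (hi : i < N) (ha : a < d) (hb : b < P) :
    dg d P i a b < d * P * (N + 1) := by
  unfold dg
  have h1 : P * (a + 1) ≤ P * d := Nat.mul_le_mul_left _ ha
  have h2 : d * (b + 1) ≤ d * P := Nat.mul_le_mul_left _ hb
  have h3 : d * P * (i + 1) ≤ d * P * N := Nat.mul_le_mul_left _ hi
  have : 0 < d := by omega
  have : 0 < P := by omega
  nlinarith

lemma val_sum (h : IsCurve v x y z d P U V) {ι : Type*} (T : Finset ι) (f : ι → E) (g : ι → ℕ)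
    (hf : ∀ i ∈ T, f i ≠ 0 → v (f i) ^ (d * P) = v x ^ g i)
    (hinj : ∀ i ∈ T, ∀ j ∈ T, f i ≠ 0 → f j ≠ 0 → g i = g j → i = j)
    (hne : ∃ i ∈ T, f i ≠ 0) :
    ∃ j ∈ T, f j ≠ 0 ∧ v (∑ i ∈ T, f i) ^ (d * P) = v x ^ g j := by
  classical
  obtain ⟨i0, hi0, hi0'⟩ := hne
  obtain ⟨j, hj, hjmax⟩ := Finset.exists_max_image (T.filter (fun i => f i ≠ 0)) g
    ⟨i0, by simp [hi0, hi0']⟩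
  simp only [Finset.mem_filter] at hj hjmax
  refine ⟨j, hj.1, hj.2, ?_⟩
  rw [Valuation.map_sum_eq_of_lt v hj.1, hf j hj.1 hj.2]
  intro i hi
  simp only [Finset.mem_sdiff, Finset.mem_singleton] at hi
  by_cases hfi : f i = 0
  · rw [hfi, map_zero]
    exact (Valuation.pos_iff v).mpr hj.2
  · have h1 : g i < g j := lt_of_le_of_ne (hjmax i ⟨hi.1, hfi⟩)
      (fun he => hi.2 (hinj i hi.1 j hj.1 hfi hj.2 he))
    have h2 : v (f i) ^ (d * P) < v (f j) ^ (d * P) := by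
      rw [hf i hi.1 hfi, hf j hj.1 hj.2]
      exact pow_lt_pow_right₀ h.hx h1
    exact lt_of_pow_lt_pow_left₀ _ zero_le h2

/-- span of reduced monomials of bounded `x`-degree -/
def M (K : Type*) {E : Type*} [Field K] [Field E] [Algebra K E] (x y z : E) (d P N : ℕ) :
    Submodule K E :=
  Submodule.span K (Set.range (fun t : Fin N × Fin d × Fin P =>
    x ^ (t.1 : ℕ) * y ^ (t.2.1 : ℕ) * z ^ (t.2.2 : ℕ)))

lemma mon_mem {N i a b : ℕ} (hi : i < N) (ha : a < d) (hb : b < P) :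
    x ^ i * y ^ a * z ^ b ∈ M K x y z d P N :=
  Submodule.subset_span ⟨(⟨i, hi⟩, ⟨a, ha⟩, ⟨b, hb⟩), rfl⟩

lemma M_ind {N : ℕ} {S : Submodule K E} {w : E}
    (hw : ∀ i a b, i < N → a < d → b < P → w * (x ^ i * y ^ a * z ^ b) ∈ S)
    {m : E} (hm : m ∈ M K x y z d P N) : w * m ∈ S := by
  induction hm using Submodule.span_induction with
  | mem m hm =>
    obtain ⟨t, rfl⟩ := hm
    exact hw _ _ _ t.1.2 t.2.1.2 t.2.2.2
  | zero => simp
  | add m m' _ _ h1 h2 => rw [mul_add]; exact S.add_mem h1 h2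
  | smul c m _ h1 => rw [mul_smul_comm]; exact S.smul_mem _ h1

lemma M_mono {N N' : ℕ} (h : N ≤ N') : M K x y z d P N ≤ M K x y z d P N' := by
  intro m hm
  rw [← one_mul m]
  refine M_ind ?_ hm
  intro i a b hi ha hb
  rw [one_mul]
  exact mon_mem (by omega) ha hb

lemma x_mul_mem {N : ℕ} {m : E} (hm : m ∈ M K x y z d P N) :
    x * m ∈ M K x y z d P (N + 1) := by
  refine M_ind ?_ hm
  intro i a b hi ha hb
  have : x * (x ^ i * y ^ a * z ^ b) = x ^ (i + 1) * y ^ a * z ^ b := by ring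
  rw [this]
  exact mon_mem (by omega) ha hb

lemma xy_mul_mem (h : IsCurve v x y z d P U V) {N : ℕ} {m : E} (hm : m ∈ M K x y z d P N) :
    (x * y) * m ∈ M K x y z d P (N + 2) := by
  refine M_ind ?_ hm
  intro i a b hi ha hb
  by_cases hd : a + 1 < d
  · have : (x * y) * (x ^ i * y ^ a * z ^ b) = x ^ (i + 1) * y ^ (a + 1) * z ^ b := by ring
    rw [this]
    exact mon_mem (by omega) hd hb
  · have e : a + 1 = d := by omega
    have : (x * y) * (x ^ i * y ^ a * z ^ b) =
        x ^ (i + 2) * y ^ 0 * z ^ b + x ^ i * y ^ 0 * z ^ b := by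
      have h1 : (x * y) * (x ^ i * y ^ a * z ^ b) = x ^ (i + 1) * z ^ b * y ^ (a + 1) := by ring
      rw [h1, e, h.hy]
      have := h.x_ne
      field_simp
      ring
    rw [this]
    exact Submodule.add_mem _ (mon_mem (by omega) h.hd hb) (mon_mem (by omega) h.hd hb)

lemma xz_mul_mem (h : IsCurve v x y z d P U V) {N : ℕ} {m : E} (hm : m ∈ M K x y z d P N) :
    (x * z) * m ∈ M K x y z d P (N + 2) := by
  refine M_ind ?_ hm
  intro i a b hi ha hb
  by_cases hd : b + 1 < P
  · have : (x * z) * (x ^ i * y ^ a * z ^ b) = x ^ (i + 1) * y ^ a * z ^ (b + 1) := by ring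
    rw [this]
    exact mon_mem (by omega) ha hd
  · have e : b + 1 = P := by omega
    have : (x * z) * (x ^ i * y ^ a * z ^ b) =
        x ^ (i + 1) * y ^ a * z ^ 1 + U • (x ^ (i + 2) * y ^ a * z ^ 0)
          + V • (x ^ i * y ^ a * z ^ 0) := by
      have h1 : (x * z) * (x ^ i * y ^ a * z ^ b) = x ^ (i + 1) * y ^ a * z ^ (b + 1) := by ring
      rw [h1, e, h.hz, Algebra.smul_def, Algebra.smul_def]
      have := h.x_ne
      field_simp
      ring
    rw [this]
    have := h.hP
    exact Submodule.add_mem _ (Submodule.add_mem _ (mon_mem (by omega) ha h.hP)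
      (Submodule.smul_mem _ _ (mon_mem (by omega) ha (by omega))))
      (Submodule.smul_mem _ _ (mon_mem (by omega) ha (by omega)))

lemma x_pow_mul_mem {N : ℕ} {m : E} (hm : m ∈ M K x y z d P N) (k : ℕ) :
    x ^ k * m ∈ M K x y z d P (N + k) := by
  induction k with
  | zero => simpa using hm
  | succ k ih =>
    rw [pow_succ', mul_assoc, ← add_assoc]
    exact x_mul_mem ih

lemma xy_pow_mul_mem (h : IsCurve v x y z d P U V) {N : ℕ} {m : E}
    (hm : m ∈ M K x y z d P N) (k : ℕ) :
    (x * y) ^ k * m ∈ M K x y z d P (N + 2 * k) := by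
  induction k with
  | zero => simpa using hm
  | succ k ih =>
    rw [pow_succ', mul_assoc, Nat.mul_succ, ← add_assoc]
    exact h.xy_mul_mem ih

lemma xz_pow_mul_mem (h : IsCurve v x y z d P U V) {N : ℕ} {m : E}
    (hm : m ∈ M K x y z d P N) (k : ℕ) :
    (x * z) ^ k * m ∈ M K x y z d P (N + 2 * k) := by
  induction k with
  | zero => simpa using hm
  | succ k ih =>
    rw [pow_succ', mul_assoc, Nat.mul_succ, ← add_assoc]
    exact h.xz_mul_mem ih

lemma mon_mul_mem (h : IsCurve v x y z d P U V) {N : ℕ} {m : E}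
    (hm : m ∈ M K x y z d P N) {R i a b : ℕ} (hR : a + b ≤ R) :
    x ^ R * (x ^ i * y ^ a * z ^ b) * m ∈ M K x y z d P (N + i + 2 * R) := by
  obtain ⟨R', rfl⟩ := Nat.exists_eq_add_of_le hR
  have e : x ^ (a + b + R') * (x ^ i * y ^ a * z ^ b) * m =
    x ^ (R' + i) * ((x * y) ^ a * ((x * z) ^ b * m)) := by
    simp only [pow_add, mul_pow]; ring
  rw [e]
  exact M_mono (by omega) (x_pow_mul_mem (h.xy_pow_mul_mem (h.xz_pow_mul_mem hm b) a) (R' + i))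

lemma one_mem (h : IsCurve v x y z d P U V) : (1 : E) ∈ M K x y z d P 1 := by
  have := mon_mem (K := K) (x := x) (y := y) (z := z) (N := 1) (i := 0) (a := 0) (b := 0)
    (by omega) h.hd (lt_trans Nat.zero_lt_one h.hP)
  simpa using this

lemma mon_mem' (h : IsCurve v x y z d P U V) {R i a b : ℕ} (hR : a + b ≤ R) :
    x ^ R * (x ^ i * y ^ a * z ^ b) ∈ M K x y z d P (1 + i + 2 * R) := by
  simpa using h.mon_mul_mem h.one_mem (i := i) hR

lemma finrank_M_le (N : ℕ) : Module.finrank K (M K x y z d P N) ≤ N * (d * P) := by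
  refine (finrank_range_le_card _).trans ?_
  simp

/-- The coordinate ring -/
def coordRing (h : IsCurve v x y z d P U V) : Subalgebra K E where
  carrier := {w | ∃ k N, x ^ k * w ∈ M K x y z d P N}
  mul_mem' := by
    rintro w w' ⟨k, N, hw⟩ ⟨k', N', hw'⟩
    refine ⟨(d + P) + k' + k, N' + N + 2 * (d + P), ?_⟩
    have e : x ^ ((d + P) + k' + k) * (w * w') =
      (x ^ (d + P) * (x ^ k' * w')) * (x ^ k * w) := by rw [pow_add, pow_add]; ring
    rw [e]
    refine M_ind ?_ hw
    intro i a b hi ha hb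
    have := h.mon_mul_mem hw' (R := d + P) (i := i) (a := a) (b := b) (by omega)
    refine M_mono (N := N' + i + 2 * (d + P)) (by omega) ?_
    convert this using 1
    ring
  add_mem' := by
    rintro w w' ⟨k, N, hw⟩ ⟨k', N', hw'⟩
    refine ⟨k + k', (N + k') + (N' + k), ?_⟩
    have e : x ^ (k + k') * (w + w') = x ^ k' * (x ^ k * w) + x ^ k * (x ^ k' * w') := by
      rw [pow_add]; ring
    rw [e]
    exact Submodule.add_mem _ (M_mono (by omega) (x_pow_mul_mem hw k'))
      (M_mono (by omega) (x_pow_mul_mem hw' k))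
  algebraMap_mem' := by
    intro c
    refine ⟨0, 1, ?_⟩
    rw [pow_zero, one_mul, Algebra.algebraMap_eq_smul_one]
    exact Submodule.smul_mem _ _ h.one_mem

lemma mem_coordRing (h : IsCurve v x y z d P U V) {w : E} :
    w ∈ h.coordRing ↔ ∃ k N, x ^ k * w ∈ M K x y z d P N := Iff.rfl

lemma mon_mem_coord (h : IsCurve v x y z d P U V) (i a b : ℕ) :
    x ^ i * y ^ a * z ^ b ∈ h.coordRing :=
  ⟨a + b, _, h.mon_mem' le_rfl⟩

lemma x_mem_coord (h : IsCurve v x y z d P U V) : x ∈ h.coordRing := by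
  simpa using h.mon_mem_coord 1 0 0
lemma y_mem_coord (h : IsCurve v x y z d P U V) : y ∈ h.coordRing := by
  simpa using h.mon_mem_coord 0 1 0
lemma z_mem_coord (h : IsCurve v x y z d P U V) : z ∈ h.coordRing := by
  simpa using h.mon_mem_coord 0 0 1
lemma xinv_mem_coord (h : IsCurve v x y z d P U V) : x⁻¹ ∈ h.coordRing := by
  refine ⟨1, 1, ?_⟩
  rw [pow_one, mul_inv_cancel₀ h.x_ne]
  exact h.one_mem

/-- the coordinate map -/
noncomputable def Phi (x y z : E) {d P : ℕ} (C : Fin d × Fin P → K[X]) : E :=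
  ∑ t, aeval x (C t) * (y ^ (t.1 : ℕ) * z ^ (t.2 : ℕ))

lemma exists_Phi {N : ℕ} {m : E} (hm : m ∈ M K x y z d P N) :
    ∃ C : Fin d × Fin P → K[X], Phi x y z C = m := by
  induction hm using Submodule.span_induction with
  | mem m hm =>
    obtain ⟨⟨i, a, b⟩, rfl⟩ := hm
    refine ⟨fun t => if t = (a, b) then X ^ (i : ℕ) else 0, ?_⟩
    unfold Phi
    rw [Finset.sum_eq_single (a, b)]
    · simp [mul_assoc]
    · intro t _ ht
      simp [ht]
    · simp
  | zero => exact ⟨0, by simp [Phi]⟩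
  | add m m' _ _ h1 h2 =>
    obtain ⟨C, rfl⟩ := h1
    obtain ⟨C', rfl⟩ := h2
    exact ⟨C + C', by simp [Phi, add_mul, Finset.sum_add_distrib]⟩
  | smul c m _ h1 =>
    obtain ⟨C, rfl⟩ := h1
    exact ⟨c • C, by simp [Phi, Finset.smul_sum]⟩

lemma v_aeval (h : IsCurve v x y z d P U V) {p : K[X]} (hp : p ≠ 0) :
    v (aeval x p) = v x ^ p.natDegree := by
  rw [aeval_eq_sum_range]
  rw [Valuation.map_sum_eq_of_lt v (j := p.natDegree) (by simp)]
  · rw [Algebra.smul_def, map_mul, h.hK _ (by simpa using hp), one_mul, map_pow]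
  · intro i hi
    simp only [Finset.mem_sdiff, Finset.mem_range, Finset.mem_singleton] at hi
    rw [Algebra.smul_def, Algebra.smul_def, map_mul, map_mul, h.hK (p.coeff p.natDegree) (by simpa using hp), one_mul, map_pow, map_pow]
    calc v (algebraMap K E (p.coeff i)) * v x ^ i ≤ 1 * v x ^ i := by
          gcongr; exact h.vK_le _
      _ < v x ^ p.natDegree := by
          rw [one_mul]; exact pow_lt_pow_right₀ h.hx (by omega)

lemma y_ne (h : IsCurve v x y z d P U V) : y ≠ 0 := by
  rintro rfl
  have := h.vy
  rw [map_zero, zero_pow h.hd.ne'] at this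
  exact (v.ne_zero_iff.mpr h.x_ne) this.symm

lemma z_ne (h : IsCurve v x y z d P U V) : z ≠ 0 := by
  rintro rfl
  have := h.vz
  rw [map_zero, zero_pow (by have := h.hP; omega)] at this
  exact (v.ne_zero_iff.mpr h.x_ne) this.symm

lemma v_Phi (h : IsCurve v x y z d P U V) {C : Fin d × Fin P → K[X]} (hC : C ≠ 0) :
    ∃ t, C t ≠ 0 ∧ v (Phi x y z C) ^ (d * P) = v x ^ dg d P (C t).natDegree t.1 t.2 := by
  have hne : ∀ t, aeval x (C t) * (y ^ (t.1 : ℕ) * z ^ (t.2 : ℕ)) ≠ 0 → C t ≠ 0 := by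
    intro t ht h0
    simp [h0] at ht
  have hne' : ∀ t, C t ≠ 0 → aeval x (C t) * (y ^ (t.1 : ℕ) * z ^ (t.2 : ℕ)) ≠ 0 := by
    intro t ht
    refine mul_ne_zero ?_ (mul_ne_zero (pow_ne_zero _ h.y_ne) (pow_ne_zero _ h.z_ne))
    rw [← v.ne_zero_iff, h.v_aeval ht]
    exact pow_ne_zero _ (v.ne_zero_iff.mpr h.x_ne)
  obtain ⟨t0, ht0⟩ := Function.ne_iff.mp hC
  obtain ⟨j, -, hj, hj'⟩ := h.val_sum Finset.univ
    (fun t : Fin d × Fin P => aeval x (C t) * (y ^ (t.1 : ℕ) * z ^ (t.2 : ℕ)))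
    (fun t => dg d P (C t).natDegree t.1 t.2) (by
      intro t _ ht
      rw [← h.vmon]
      simp only [map_mul, map_pow]
      rw [h.v_aeval (hne t ht), mul_assoc]) (by
      intro i _ j _ _ _ hij
      obtain ⟨-, h1, h2⟩ := h.dg_inj i.1.2 j.1.2 i.2.2 j.2.2 hij
      exact Prod.ext (Fin.ext h1) (Fin.ext h2)) ⟨t0, Finset.mem_univ _, hne' _ ht0⟩
  exact ⟨j, hne j hj, hj'⟩

lemma Phi_sub (C C' : Fin d × Fin P → K[X]) :
    Phi x y z (C - C') = Phi x y z C - Phi x y z C' := by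
  simp [Phi, sub_mul, Finset.sum_sub_distrib]

lemma Phi_smul (p : K[X]) (C : Fin d × Fin P → K[X]) :
    Phi x y z (fun t => p * C t) = aeval x p * Phi x y z C := by
  simp [Phi, Finset.mul_sum, mul_assoc]

lemma Phi_inj (h : IsCurve v x y z d P U V) {C C' : Fin d × Fin P → K[X]}
    (hC : Phi x y z C = Phi x y z C') : C = C' := by
  by_contra hne
  obtain ⟨t, ht, ht'⟩ := h.v_Phi (sub_ne_zero.mpr hne)
  rw [Phi_sub, hC, sub_self, map_zero] at ht'
  rw [zero_pow (Nat.mul_pos h.hd (by have := h.hP; omega)).ne'] at ht'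
  exact pow_ne_zero _ (v.ne_zero_iff.mpr h.x_ne) ht'.symm

/-- divisibility by `x - c` is seen on coordinates -/
lemma root_of_dvd (h : IsCurve v x y z d P U V) {C : Fin d × Fin P → K[X]} {c : K} (hc : c ≠ 0)
    {R : ℕ} {G w : E} (hG : Phi x y z C = x ^ R * G) (hw : w ∈ h.coordRing)
    (hGw : G = (x - algebraMap K E c) * w) (t : Fin d × Fin P) : (C t).IsRoot c := by
  obtain ⟨k, N, hk⟩ := hw
  obtain ⟨H, hH⟩ := exists_Phi hk
  have : Phi x y z (fun t => X ^ k * C t) = Phi x y z (fun t => (X ^ R * (X - Polynomial.C c)) * H t) := by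
    rw [Phi_smul, Phi_smul, hG, hH, hGw]
    simp
    ring
  have := congrFun (h.Phi_inj this) t
  have := congrArg (eval c) this
  simp at this
  exact this.resolve_left (fun h => hc h.1)

end IsCurve


section frob
variable {K B : Type*} [Field K] [Fintype K] [CommRing B] [Algebra K B]

lemma Yfrob {d r : ℕ} {η : K} {Y : B} (hr : d ∣ r - 1) (hr1 : 0 < r) (hY : Y ^ d = algebraMap K B η) :
    Y ^ r = algebraMap K B (η ^ ((r - 1) / d)) * Y := by
  obtain ⟨k, hk⟩ := hr
  rcases Nat.eq_zero_or_pos d with h0 | h0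
  · subst h0
    have : r = 1 := by omega
    simp [this]
  have e : r = d * k + 1 := by omega
  rw [hk, Nat.mul_div_cancel_left _ h0, e, pow_succ, pow_mul, hY, map_pow]

lemma K_pow_pow (c : K) (k : ℕ) : c ^ (Fintype.card K ^ k) = c := by
  exact FiniteField.pow_card_pow k c

lemma Yfrob' {r : ℕ} {α : K} {Y : B} (hr : Fintype.card K = r)
    (hY : Y ^ r = algebraMap K B α * Y) (k : ℕ) : Y ^ (r ^ k) = algebraMap K B (α ^ k) * Y := by
  induction k with
  | zero => simp
  | succ k ih =>
    rw [pow_succ, pow_mul, ih, mul_pow, hY, ← map_pow, ← mul_assoc, ← map_mul, ← hr,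
      FiniteField.pow_card, ← pow_succ]

variable {p : ℕ} [Fact p.Prime] [CharP B p]

lemma Zfrob {P f : ℕ} (hP : P = p ^ f) {g : K} {Z : B} (hZ : Z ^ P = Z + algebraMap K B g) (j : ℕ) :
    Z ^ (P ^ j) = Z + algebraMap K B (∑ i ∈ Finset.range j, g ^ (P ^ i)) := by
  induction j with
  | zero => simp
  | succ j ih =>
    rw [pow_succ', pow_mul, hZ]
    have : ∀ a b : B, (a + b) ^ (P ^ j) = a ^ (P ^ j) + b ^ (P ^ j) := by
      intro a b
      rw [hP, ← pow_mul, add_pow_char_pow]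
    rw [this, ih, Finset.sum_range_succ, ← map_pow, map_add, add_assoc]

lemma Zfrob' {r f : ℕ} (hr : Fintype.card K = r) (hP : r = p ^ f) {β : K} {Z : B}
    (hZ : Z ^ r = Z + algebraMap K B β) (k : ℕ) :
    Z ^ (r ^ k) = Z + algebraMap K B (k * β) := by
  rw [Zfrob (K := K) hP hZ k]
  congr 2
  rw [Finset.sum_congr rfl (g := fun _ => β)]
  · simp
  · intro i _
    rw [← hr, K_pow_pow]
end frob

namespace IsCurve
variable {K E Γ : Type*} [Field K] [Fintype K] [Field E] [Algebra K E]
    [LinearOrderedCommGroupWithZero Γ] {v : Valuation E Γ} {x y z : E} {d P : ℕ} {U V : K}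

variable {p : ℕ} [Fact p.Prime] [CharP K p]

/-- The reduction of the coordinate ring at `x = c`. -/
abbrev Red (h : IsCurve v x y z d P U V) (c : K) : Type _ :=
  h.coordRing ⧸ (Ideal.span {(⟨x, h.x_mem_coord⟩ - algebraMap K h.coordRing c : h.coordRing)})

/-- The reduction map. -/
abbrev red (h : IsCurve v x y z d P U V) (c : K) : h.coordRing →ₐ[K] h.Red c :=
  Ideal.Quotient.mkₐ K _

lemma red_eq_zero (h : IsCurve v x y z d P U V) (c : K) (w : h.coordRing) :
    h.red c w = 0 ↔ ∃ w' ∈ h.coordRing, (w : E) = (x - algebraMap K E c) * w' := by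
  rw [Ideal.Quotient.mkₐ_eq_mk, Ideal.Quotient.eq_zero_iff_mem, Ideal.mem_span_singleton]
  constructor
  · rintro ⟨w', rfl⟩
    exact ⟨w', w'.2, rfl⟩
  · rintro ⟨w', hw', e⟩
    exact ⟨⟨w', hw'⟩, Subtype.ext e⟩

lemma red_x (h : IsCurve v x y z d P U V) (c : K) :
    h.red c ⟨x, h.x_mem_coord⟩ = algebraMap K _ c := by
  rw [← (h.red c).commutes c, ← sub_eq_zero, ← map_sub, red_eq_zero]
  exact ⟨1, h.coordRing.one_mem, by simp⟩

lemma red_xinv (h : IsCurve v x y z d P U V) {c : K} (hc : c ≠ 0) :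
    h.red c ⟨x⁻¹, h.xinv_mem_coord⟩ = algebraMap K _ c⁻¹ := by
  have h1 : h.red c ⟨x, h.x_mem_coord⟩ * h.red c ⟨x⁻¹, h.xinv_mem_coord⟩ = 1 := by
    rw [← map_mul, ← map_one (h.red c)]
    congr 1
    exact Subtype.ext (mul_inv_cancel₀ h.x_ne)
  rw [red_x] at h1
  have h2 : algebraMap K (h.Red c) c⁻¹ * algebraMap K (h.Red c) c = 1 := by
    rw [← map_mul, inv_mul_cancel₀ hc, map_one]
  calc _ = (algebraMap K (h.Red c) c⁻¹ * algebraMap K (h.Red c) c) *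
        h.red c ⟨x⁻¹, h.xinv_mem_coord⟩ := by rw [h2, one_mul]
    _ = _ := by rw [mul_assoc, h1, mul_one]

lemma red_y (h : IsCurve v x y z d P U V) {c : K} (hc : c ≠ 0) :
    (h.red c ⟨y, h.y_mem_coord⟩) ^ d = algebraMap K _ (c + c⁻¹) := by
  rw [map_add, ← h.red_x, ← h.red_xinv hc, ← map_pow, ← map_add]
  congr 1
  exact Subtype.ext h.hy

lemma red_z (h : IsCurve v x y z d P U V) {c : K} (hc : c ≠ 0) :
    (h.red c ⟨z, h.z_mem_coord⟩) ^ P = h.red c ⟨z, h.z_mem_coord⟩ +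
      algebraMap K _ (U * c + V * c⁻¹) := by
  rw [map_add, map_mul, map_mul, ← h.red_x, ← h.red_xinv hc, ← (h.red c).commutes U,
    ← (h.red c).commutes V, ← map_pow, ← map_mul, ← map_mul, ← map_add, ← map_add]
  congr 1
  refine Subtype.ext ?_
  rw [← add_assoc]
  exact h.hz

lemma red_fixed (h : IsCurve v x y z d P U V) (hp : ∃ f, P = p ^ f) {j : ℕ}
    (hcard : Fintype.card K = P ^ j) (hdr : d ∣ P ^ j - 1) {c : K} (hc : c ≠ 0) (hc' : c + c⁻¹ ≠ 0)
    (w : h.coordRing) : (h.red c w) ^ ((P ^ j) ^ (d * P)) = h.red c w := by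
  rcases subsingleton_or_nontrivial (h.Red c) with hs | hs
  · exact Subsingleton.elim _ _
  have : CharP (h.Red c) p :=
    charP_of_injective_algebraMap (algebraMap K (h.Red c)).injective p
  obtain ⟨f, hf⟩ := hp
  set R := (P ^ j) ^ (d * P) with hR
  have hRp : R = p ^ (f * j * (d * P)) := by rw [hR, hf, ← pow_mul, ← pow_mul, mul_assoc]
  have hj : Fintype.card K = p ^ (f * j) := by rw [hcard, hf, ← pow_mul]
  have hP0 : 0 < P ^ j := Nat.pow_pos (by have := h.hP; omega)
  have hKR : ∀ c : K, c ^ R = c := by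
    intro c
    rw [hR, ← hcard, K_pow_pow]
  have hY : (h.red c ⟨y, h.y_mem_coord⟩) ^ R = h.red c ⟨y, h.y_mem_coord⟩ := by
    have h1 := Yfrob' hcard (Yfrob hdr hP0 (h.red_y hc)) (d * P)
    rw [hR, h1, pow_mul, ← pow_mul (c + c⁻¹), Nat.div_mul_cancel hdr, ← hcard,
      FiniteField.pow_card_sub_one_eq_one _ hc', one_pow, map_one, one_mul]
  have hZ : (h.red c ⟨z, h.z_mem_coord⟩) ^ R = h.red c ⟨z, h.z_mem_coord⟩ := by
    have h1 := Zfrob' hcard (hcard.symm.trans hj) (Zfrob (K := K) hf (h.red_z hc) j) (d * P)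
    have h2 : ((d * P : ℕ) : K) = 0 := by
      rw [CharP.cast_eq_zero_iff K p]
      apply Dvd.dvd.mul_left
      rw [hf]
      refine dvd_pow_self p ?_
      rintro rfl
      have := h.hP
      simp [hf] at this
    rw [hR, h1, h2, zero_mul, map_zero, add_zero]
  have hadd : ∀ a b : h.Red c, (a + b) ^ R = a ^ R + b ^ R := by
    intro a b
    rw [hRp, add_pow_char_pow]
  have key : ∀ (m : E) (N : ℕ) (hm : m ∈ M K x y z d P N) (hm' : m ∈ h.coordRing),
      (h.red c ⟨m, hm'⟩) ^ R = h.red c ⟨m, hm'⟩ := by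
    intro m N hm
    induction hm using Submodule.span_induction with
    | mem m hm =>
      intro hm'
      obtain ⟨⟨i, a, b⟩, rfl⟩ := hm
      have e : (⟨_, hm'⟩ : h.coordRing) = ⟨x, h.x_mem_coord⟩ ^ (i : ℕ) * ⟨y, h.y_mem_coord⟩ ^ (a : ℕ)
        * ⟨z, h.z_mem_coord⟩ ^ (b : ℕ) := Subtype.ext rfl
      rw [e, map_mul, map_mul, map_pow, map_pow, map_pow, mul_pow, mul_pow, pow_right_comm,
        pow_right_comm _ (a : ℕ), pow_right_comm _ (b : ℕ), hY, hZ, red_x, ← map_pow _ _ R, hKR]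
    | zero =>
      intro hm'
      have e : (⟨_, hm'⟩ : h.coordRing) = 0 := Subtype.ext rfl
      rw [e, map_zero, zero_pow]
      rw [hR]; positivity
    | add m m' hm hm'' h1 h2 =>
      intro hm'
      have a1 : m ∈ h.coordRing := ⟨0, N, by rw [pow_zero, one_mul]; exact hm⟩
      have a2 : m' ∈ h.coordRing := ⟨0, N, by rw [pow_zero, one_mul]; exact hm''⟩
      have e : (⟨_, hm'⟩ : h.coordRing) = ⟨m, a1⟩ + ⟨m', a2⟩ := Subtype.ext rfl
      rw [e, map_add, hadd, h1, h2]
    | smul κ m hm h1 =>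
      intro hm'
      have a1 : m ∈ h.coordRing := ⟨0, N, by rw [pow_zero, one_mul]; exact hm⟩
      have e : (⟨_, hm'⟩ : h.coordRing) = algebraMap K _ κ * ⟨m, a1⟩ :=
        Subtype.ext (Algebra.smul_def _ _)
      rw [e, map_mul, mul_pow, h1, AlgHom.commutes, ← map_pow, hKR]
  obtain ⟨k, N, hk⟩ := w.2
  have hk' : x ^ k * (w : E) ∈ h.coordRing := ⟨0, N, by simpa using hk⟩
  have h1 := key _ _ hk hk'
  have e : (⟨_, hk'⟩ : h.coordRing) = ⟨x, h.x_mem_coord⟩ ^ k * w := Subtype.ext rfl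
  rw [e, map_mul, map_pow, red_x, mul_pow, pow_right_comm, ← map_pow _ _ R, hKR, ← map_pow] at h1
  have hu : IsUnit (algebraMap K (h.Red c) (c ^ k)) :=
    (IsUnit.mk0 _ (pow_ne_zero k hc)).map _
  exact hu.mul_left_cancel h1

end IsCurve


namespace IsCurve
variable {K E Γ : Type*} [Field K] [Fintype K] [Field E] [Algebra K E]
    [LinearOrderedCommGroupWithZero Γ] {v : Valuation E Γ} {x y z : E} {d P : ℕ} {U V : K}

variable {p : ℕ} [Fact p.Prime] [CharP K p]

lemma aux_mem (h : IsCurve v x y z d P U V) (α β : K) {s L I i a b i' a' b' R N : ℕ}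
    (hi : i < I) (ha : a < d) (hb : b < P) (hi' : i' < L) (ha' : a' < d) (hb' : b' < P)
    (hR : R = (d + P) * (s + 1)) (hN : N = 1 + L * s + I + 2 * R) :
    x ^ R * ((x ^ i' * y ^ a' * z ^ b') ^ s *
      (x ^ i * (algebraMap K E α * y) ^ a * (z + algebraMap K E β) ^ b)) ∈ M K x y z d P N := by
  have e : x ^ R * ((x ^ i' * y ^ a' * z ^ b') ^ s *
      (x ^ i * (algebraMap K E α * y) ^ a * (z + algebraMap K E β) ^ b)) =
      ∑ k ∈ Finset.range (b + 1), (α ^ a * β ^ (b - k) * (b.choose k : K)) •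
        (x ^ R * (x ^ (i' * s + i) * y ^ (a' * s + a) * z ^ (b' * s + k))) := by
    rw [add_pow, Finset.mul_sum, Finset.mul_sum, Finset.mul_sum]
    refine Finset.sum_congr rfl fun k hk => ?_
    rw [Algebra.smul_def]
    simp only [map_mul, map_pow, map_natCast, mul_pow, pow_add, pow_mul]
    ring
  rw [e]
  refine Submodule.sum_mem _ fun k hk => Submodule.smul_mem _ _ ?_
  simp only [Finset.mem_range] at hk
  have h1 : (a' + 1) * s ≤ d * s := Nat.mul_le_mul_right _ ha'
  have h2 : (b' + 1) * s ≤ P * s := Nat.mul_le_mul_right _ hb'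
  have h3 : (i' + 1) * s ≤ L * s := Nat.mul_le_mul_right _ hi'
  refine M_mono ?_ (h.mon_mem' (R := R) ?_)
  · rw [hN]; nlinarith
  · rw [hR]; nlinarith

theorem curve_count (h : IsCurve v x y z d P U V) (hp : ∃ f, P = p ^ f) {m : ℕ}
    (hcard : Fintype.card K = P ^ (2 * m)) (hdr : d ∣ P ^ (2 * m) - 1) {s L I R : ℕ}
    (hs : s = P ^ m) (hR : R = (d + P) * (s + 1)) (hL : d * P * (L + 1) ≤ s)
    (hI : 1 + L * s + I + 2 * R < L * I * (d * P)) (α β : K) (T : Finset K)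
    (hT : ∀ c ∈ T, c ≠ 0 ∧ c + c⁻¹ ≠ 0 ∧ (c + c⁻¹) ^ ((P ^ (2 * m) - 1) / d) = α ∧
      ∑ i ∈ Finset.range (2 * m), (U * c + V * c⁻¹) ^ (P ^ i) = β) :
    d * P * T.card ≤ d * P * R + (s + s * (d * P * (I + 1))) := by
  classical
  let J := (Fin L × Fin d × Fin P) × (Fin I × Fin d × Fin P)
  have hdP : 0 < d * P := Nat.mul_pos h.hd (by have := h.hP; omega)
  set N := 1 + L * s + I + 2 * R with hN
  have hss : s * s = P ^ (2 * m) := by rw [hs, ← pow_add]; congr 1; ring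
  have hs0 : 0 < s := by rw [hs]; exact Nat.pow_pos (by have := h.hP; omega)
  obtain ⟨f, hf⟩ := hp
  have hsp : s = p ^ (f * m) := by rw [hs, hf, pow_mul]
  have hKs : ∀ c : K, (c ^ s) ^ s = c := by
    intro c
    rw [← pow_mul, hss, ← hcard, FiniteField.pow_card]
  -- the linear system
  let A : J → E := fun t => (x ^ (t.1.1 : ℕ) * y ^ (t.1.2.1 : ℕ) * z ^ (t.1.2.2 : ℕ)) ^ s *
      (x ^ (t.2.1 : ℕ) * (algebraMap K E α * y) ^ (t.2.2.1 : ℕ) *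
        (z + algebraMap K E β) ^ (t.2.2.2 : ℕ))
  have hA : ∀ t, x ^ R * A t ∈ M K x y z d P N := fun t =>
    h.aux_mem α β t.2.1.2 t.2.2.1.2 t.2.2.2.2 t.1.1.2 t.1.2.1.2 t.1.2.2.2 hR hN
  let ℓ : (J → K) →ₗ[K] M K x y z d P N :=
    Fintype.linearCombination K (fun t => (⟨x ^ R * A t, hA t⟩ : M K x y z d P N))
  have : FiniteDimensional K (M K x y z d P N) :=
    FiniteDimensional.span_of_finite K (Set.finite_range _)
  have hker : LinearMap.ker ℓ ≠ ⊥ := by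
    apply LinearMap.ker_ne_bot_of_finrank_lt
    refine (finrank_M_le N).trans_lt ?_
    rw [Module.finrank_fintype_fun_eq_card]
    have : Fintype.card J = L * (d * P) * (I * (d * P)) := by
      simp [J, Fintype.card_prod]
    rw [this]
    calc N * (d * P) < L * I * (d * P) * (d * P) := Nat.mul_lt_mul_of_pos_right hI hdP
      _ = _ := by ring
  obtain ⟨γ', hγ', hγ0⟩ := (Submodule.ne_bot_iff _).mp hker
  have hsum : ∑ t, algebraMap K E (γ' t) * A t = 0 := by
    have h1 := congrArg (Submodule.subtype _) (LinearMap.mem_ker.mp hγ')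
    simp only [ℓ, Fintype.linearCombination_apply, map_sum, map_smul, Submodule.subtype_apply,
      map_zero] at h1
    have h2 : x ^ R * ∑ t, algebraMap K E (γ' t) * A t = 0 := by
      rw [← h1, Finset.mul_sum]
      refine Finset.sum_congr rfl fun t _ => ?_
      rw [Algebra.smul_def]; ring
    exact (mul_eq_zero.mp h2).resolve_left (pow_ne_zero _ h.x_ne)
  -- the auxiliary function
  let γ : J → K := fun t => γ' t ^ s
  let B : J → E := fun t => (x ^ (t.1.1 : ℕ) * y ^ (t.1.2.1 : ℕ) * z ^ (t.1.2.2 : ℕ)) *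
    (x ^ (t.2.1 : ℕ) * y ^ (t.2.2.1 : ℕ) * z ^ (t.2.2.2 : ℕ)) ^ s
  set G : E := ∑ t, algebraMap K E (γ t) * B t with hG
  let gd : J → ℕ := fun t => dg d P t.1.1 t.1.2.1 t.1.2.2 + s * dg d P t.2.1 t.2.2.1 t.2.2.2
  have hB0 : ∀ t, B t ≠ 0 := fun t => mul_ne_zero (mul_ne_zero (mul_ne_zero
    (pow_ne_zero _ h.x_ne) (pow_ne_zero _ h.y_ne)) (pow_ne_zero _ h.z_ne))
    (pow_ne_zero _ (mul_ne_zero (mul_ne_zero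
    (pow_ne_zero _ h.x_ne) (pow_ne_zero _ h.y_ne)) (pow_ne_zero _ h.z_ne)))
  have hlt : ∀ t : J, dg d P t.1.1 t.1.2.1 t.1.2.2 < s := fun t =>
    (dg_lt t.1.1.2 t.1.2.1.2 t.1.2.2.2).trans_le hL
  obtain ⟨t0, ht0⟩ := Function.ne_iff.mp hγ0
  obtain ⟨t1, -, -, hvG⟩ := h.val_sum Finset.univ (fun t => algebraMap K E (γ t) * B t) gd (by
      intro t _ ht
      have hne : γ t ≠ 0 := by
        intro h0; simp [h0] at ht
      rw [map_mul, h.hK _ hne, one_mul]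
      simp only [B, gd]
      rw [map_mul, mul_pow, map_pow, pow_right_comm, h.vmon, h.vmon, pow_add, pow_mul']) (by
      intro t _ t' _ _ _ htt
      simp only [gd] at htt
      have h1 : dg d P t.1.1 t.1.2.1 t.1.2.2 = dg d P t'.1.1 t'.1.2.1 t'.1.2.2 := by
        have := congrArg (· % s) htt
        simpa [Nat.add_mul_mod_self_left, Nat.mod_eq_of_lt (hlt t), Nat.mod_eq_of_lt (hlt t')]
          using this
      have h2 : dg d P t.2.1 t.2.2.1 t.2.2.2 = dg d P t'.2.1 t'.2.2.1 t'.2.2.2 := by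
        rw [h1] at htt
        exact Nat.eq_of_mul_eq_mul_left hs0 (Nat.add_left_cancel htt)
      obtain ⟨a1, a2, a3⟩ := h.dg_inj t.1.2.1.2 t'.1.2.1.2 t.1.2.2.2 t'.1.2.2.2 h1
      obtain ⟨b1, b2, b3⟩ := h.dg_inj t.2.2.1.2 t'.2.2.1.2 t.2.2.2.2 t'.2.2.2.2 h2
      exact Prod.ext (Prod.ext (Fin.ext a1) (Prod.ext (Fin.ext a2) (Fin.ext a3)))
        (Prod.ext (Fin.ext b1) (Prod.ext (Fin.ext b2) (Fin.ext b3))))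
      ⟨t0, Finset.mem_univ _, mul_ne_zero
        ((_root_.map_ne_zero _).mpr (pow_ne_zero s ht0)) (hB0 _)⟩
  rw [← hG] at hvG
  have hGne : G ≠ 0 := by
    intro h0
    rw [h0, map_zero, zero_pow hdP.ne'] at hvG
    exact pow_ne_zero _ (v.ne_zero_iff.mpr h.x_ne) hvG.symm
  -- coordinates
  have hGM : x ^ R * G ∈ M K x y z d P (1 + L + I * s + 2 * R) := by
    rw [hG, Finset.mul_sum]
    refine Submodule.sum_mem _ fun t _ => ?_
    have e : x ^ R * (algebraMap K E (γ t) * B t) = γ t • (x ^ R *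
      (x ^ ((t.1.1 : ℕ) + t.2.1 * s) * y ^ ((t.1.2.1 : ℕ) + t.2.2.1 * s) *
        z ^ ((t.1.2.2 : ℕ) + t.2.2.2 * s))) := by
      rw [Algebra.smul_def]
      simp only [B, mul_pow, pow_add, pow_mul]
      ring
    rw [e]
    refine Submodule.smul_mem _ _ ?_
    have h1 : ((t.2.2.1 : ℕ) + 1) * s ≤ d * s := Nat.mul_le_mul_right _ t.2.2.1.2
    have h2 : ((t.2.2.2 : ℕ) + 1) * s ≤ P * s := Nat.mul_le_mul_right _ t.2.2.2.2
    have h3 : ((t.2.1 : ℕ) + 1) * s ≤ I * s := Nat.mul_le_mul_right _ t.2.1.2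
    have h4 := t.1.1.2
    have h5 := t.1.2.1.2
    have h6 := t.1.2.2.2
    refine M_mono ?_ (h.mon_mem' (R := R) ?_)
    · nlinarith
    · rw [hR]; nlinarith
  obtain ⟨C, hC⟩ := exists_Phi hGM
  have hCne : C ≠ 0 := by
    rintro rfl
    have : x ^ R * G = 0 := by rw [← hC]; simp [Phi]
    exact mul_ne_zero (pow_ne_zero _ h.x_ne) hGne this
  obtain ⟨t2, ht2, hvC⟩ := h.v_Phi hCne
  -- vanishing at points of T
  have hroot : ∀ c ∈ T, (C t2).IsRoot c := by
    intro c hcT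
    obtain ⟨hc, hc', hα, hβ⟩ := hT c hcT
    let xh : h.coordRing := ⟨x, h.x_mem_coord⟩
    let yh : h.coordRing := ⟨y, h.y_mem_coord⟩
    let zh : h.coordRing := ⟨z, h.z_mem_coord⟩
    let Gh : h.coordRing := ∑ t : J, algebraMap K h.coordRing (γ t) *
      ((xh ^ (t.1.1 : ℕ) * yh ^ (t.1.2.1 : ℕ) * zh ^ (t.1.2.2 : ℕ)) *
    (xh ^ (t.2.1 : ℕ) * yh ^ (t.2.2.1 : ℕ) * zh ^ (t.2.2.2 : ℕ)) ^ s)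
    have hGh : (Gh : E) = G := by
      change h.coordRing.val Gh = G
      simp only [Gh, map_sum, map_mul, map_pow, AlgHom.commutes, hG, B]
      rfl
    let Ah : h.coordRing := ∑ t : J, algebraMap K h.coordRing (γ' t) *
      ((xh ^ (t.1.1 : ℕ) * yh ^ (t.1.2.1 : ℕ) * zh ^ (t.1.2.2 : ℕ)) ^ s *
      (xh ^ (t.2.1 : ℕ) * (algebraMap K _ α * yh) ^ (t.2.2.1 : ℕ) *
        (zh + algebraMap K _ β) ^ (t.2.2.2 : ℕ)))
    have hAh : Ah = 0 := by
      apply Subtype.ext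
      change h.coordRing.val Ah = 0
      rw [← hsum]
      simp only [Ah, map_sum, map_mul, map_pow, map_add, AlgHom.commutes, A]
      rfl
    have hred : h.red c Gh ^ s = 0 := by
      rcases subsingleton_or_nontrivial (h.Red c) with hs' | hs'
      · exact Subsingleton.elim _ _
      have : CharP (h.Red c) p :=
        charP_of_injective_algebraMap (algebraMap K (h.Red c)).injective p
      rw [← map_zero (h.red c), ← hAh]
      have hpow : ∀ g : J → h.Red c, (∑ t, g t) ^ s = ∑ t, g t ^ s := by
        intro g
        rw [hsp, sum_pow_char_pow]
      have hY : (h.red c yh) ^ (s * s) = algebraMap K _ α * h.red c yh := by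
        rw [← hα, hss]
        exact Yfrob hdr (Nat.pow_pos (by have := h.hP; omega)) (h.red_y hc)
      have hZ : (h.red c zh) ^ (s * s) = h.red c zh + algebraMap K _ β := by
        rw [← hβ, hss]
        exact Zfrob (K := K) hf (h.red_z hc) _
      have hX : (h.red c xh) ^ (s * s) = h.red c xh := by
        rw [h.red_x, ← map_pow, pow_mul, hKs]
      simp only [Gh, Ah, map_sum]
      rw [hpow]
      refine Finset.sum_congr rfl fun t _ => ?_
      simp only [map_mul, map_pow, map_add, AlgHom.commutes]
      rw [mul_pow, mul_pow, ← pow_mul _ s s]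
      have e1 : algebraMap K (h.Red c) (γ t) ^ s = algebraMap K (h.Red c) (γ' t) := by
        rw [← map_pow, hKs]
      rw [e1]
      congr 2
      rw [mul_pow, mul_pow, pow_right_comm, hX, pow_right_comm _ (t.2.2.1 : ℕ), hY,
        pow_right_comm _ (t.2.2.2 : ℕ), hZ]
    have hred0 : h.red c Gh = 0 := by
      have h1 := h.red_fixed ⟨f, hf⟩ hcard hdr hc hc' Gh
      have h2 : (P ^ (2 * m)) ^ (d * P) = s * (s * (P ^ (2 * m)) ^ (d * P - 1)) := by
        rw [← mul_assoc, hss, ← pow_succ']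
        congr 1; omega
      rw [← h1, h2, pow_mul, hred, zero_pow]
      have := h.hP
      positivity
    rw [h.red_eq_zero] at hred0
    obtain ⟨w, hw, hGw⟩ := hred0
    rw [hGh] at hGw
    exact h.root_of_dvd hc hC hw hGw t2
  have hdeg : T.card ≤ (C t2).natDegree := by
    refine Polynomial.card_le_degree_of_subset_roots ?_
    intro c hc
    exact (mem_roots ht2).mpr (hroot c (by simpa using hc))
  rw [hC, map_mul, mul_pow, hvG, map_pow, ← pow_mul, ← pow_add] at hvC
  have hfin := pow_right_injective₀ (zero_lt_one.trans h.hx) h.hx.ne' hvC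
  have h3 := hlt t1
  have h4 : dg d P t1.2.1 t1.2.2.1 t1.2.2.2 < d * P * (I + 1) :=
    dg_lt t1.2.1.2 t1.2.2.1.2 t1.2.2.2.2
  have h5 : s * dg d P t1.2.1 t1.2.2.1 t1.2.2.2 ≤ s * (d * P * (I + 1)) :=
    Nat.mul_le_mul_left _ h4.le
  have h6 : d * P * T.card ≤ d * P * (C t2).natDegree := Nat.mul_le_mul_left _ hdeg
  have h7 : d * P * (C t2).natDegree ≤ dg d P (C t2).natDegree t2.1 t2.2 := by
    unfold dg; omega
  simp only [gd] at hfin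
  rw [mul_comm R] at hfin
  omega

end IsCurve


lemma exists_curve {K : Type} [Field K] (d P : ℕ) (U V : K) (hU : U ≠ 0) (hd : 0 < d)
    (hP : 1 < P) (hc : Nat.Coprime d P) :
    ∃ (E : Type) (_ : Field E) (_ : Algebra K E) (Γ : Type)
      (_ : LinearOrderedCommGroupWithZero Γ) (v : Valuation E Γ) (x y z : E),
      IsCurve v x y z d P U V := by
  let E := AlgebraicClosure (RatFunc K)
  let x : E := algebraMap (RatFunc K) E RatFunc.X
  have hxt : Transcendental K x := by
    have : Transcendental K (RatFunc.X : RatFunc K) := RatFunc.transcendental_X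
    exact (transcendental_algebraMap_iff (algebraMap (RatFunc K) E).injective).mpr this
  have hx0 : x ≠ 0 := by
    rintro h
    exact hxt (h ▸ isAlgebraic_zero)
  have hxi : Transcendental K x⁻¹ := fun h => hxt (inv_inv x ▸ h.inv)
  obtain ⟨y, hy⟩ := IsAlgClosed.exists_pow_nat_eq (x + x⁻¹) hd
  obtain ⟨z, hz⟩ : ∃ z : E, z ^ P = z + algebraMap K E U * x + algebraMap K E V * x⁻¹ := by
    let w := algebraMap K E U * x + algebraMap K E V * x⁻¹
    have hdeg : ((X : E[X]) ^ P - (X + C w)).degree = (P : WithBot ℕ) := by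
      rw [degree_sub_eq_left_of_degree_lt]
      · exact degree_X_pow P
      · rw [degree_X_pow, degree_X_add_C]; exact_mod_cast hP
    obtain ⟨z, hz⟩ := IsAlgClosed.exists_root ((X : E[X]) ^ P - (X + C w)) (by
      rw [hdeg]; exact_mod_cast (by omega : P ≠ 0))
    refine ⟨z, ?_⟩
    have : z ^ P - (z + w) = 0 := by simpa [IsRoot.def] using hz
    rw [sub_eq_zero] at this
    rw [this]; simp only [w]; ring
  let A : Subring E := (aeval (R := K) x⁻¹).toRingHom.range
  have hxA : x⁻¹ ∈ A := ⟨X, by simp⟩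
  let I : Ideal A := Ideal.span {⟨x⁻¹, hxA⟩}
  have hI : I ≠ ⊤ := by
    intro h
    rw [Ideal.eq_top_iff_one, Ideal.mem_span_singleton'] at h
    obtain ⟨⟨_, f, rfl⟩, hf⟩ := h
    have h1 : aeval x⁻¹ (f * X - 1 : K[X]) = 0 := by
      have := congrArg Subtype.val hf
      simp at this
      simp [this]
    have h2 := (transcendental_iff.mp hxi) _ h1
    have := congrArg (eval 0) h2
    simp at this
  obtain ⟨B, hB1, hB2⟩ := Ideal.image_subset_nonunits_valuationSubring I hI
  refine ⟨E, inferInstance, inferInstance, B.ValueGroup, inferInstance, B.valuation, x, y, z,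
    ⟨?_, ?_, hy, hz, hU, hd, hP, hc⟩⟩
  · intro c hc0
    have hle : ∀ c : K, B.valuation (algebraMap K E c) ≤ 1 := fun c =>
      (B.valuation_le_one_iff _).mpr (hB1 ⟨C c, by simp⟩)
    refine le_antisymm (hle c) ?_
    have := hle c⁻¹
    rw [map_inv₀, map_inv₀] at this
    exact (inv_le_one₀ (by
      rw [zero_lt_iff]; exact (Valuation.ne_zero_iff _).mpr ((_root_.map_ne_zero _).mpr hc0))).mp this
  · have : x⁻¹ ∈ B.nonunits := hB2 ⟨⟨x⁻¹, hxA⟩, Ideal.subset_span rfl, rfl⟩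
    rw [ValuationSubring.mem_nonunits_iff, map_inv₀] at this
    exact (inv_lt_one₀ (by
      rw [zero_lt_iff]; exact (Valuation.ne_zero_iff _).mpr hx0)).mp this


/-- The constant in the point count. -/
def cQ (Q : ℕ) : ℕ := (Q - 1) * Q * (4 * Q + 20 * Q ^ 3 + 1) + 1

lemma arith_aux {L s I0 C1 D G R r : ℕ} (h1 : D * I0 + r = s) (hr : r ≤ D) (hD : 2 ≤ D)
    (h8 : 8 * L ≤ G) (hC : L * C1 = 20 * G) (hC2 : C1 * 2 ≤ 20 * G) (hI : I0 ≤ G)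
    (hR : R ≤ 4 * G) (hL : 0 < L) :
    1 + L * s + (I0 + C1) + 2 * R < L * (I0 + C1) * D := by
  have e1 : L * (I0 + C1) * D = L * (D * I0) + 20 * G * D := by rw [← hC]; ring
  have e2 : L * s = L * (D * I0) + L * r := by rw [← mul_add, h1]
  have e3 : L * r ≤ L * D := Nat.mul_le_mul_left _ hr
  have e4 : 8 * L * D ≤ G * D := Nat.mul_le_mul_right _ h8
  have e5 : 2 * G ≤ D * G := Nat.mul_le_mul_right _ hD
  rw [e1, e2]
  nlinarith

set_option maxHeartbeats 1000000 in
lemma class_count {F : Type*} [Field F] [Fintype F] {K : Type} [Field K] [Fintype K] [Algebra F K]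
    {Q m : ℕ} (hQ : Fintype.card F = Q) (hm : 3 ≤ m) (hfr : Module.finrank F K = 2 * m)
    {U : F} (hU : U ≠ 0) (V : F) (α β : F) (T : Finset K)
    (hT : ∀ c ∈ T, c ≠ 0 ∧ c + c⁻¹ ≠ 0 ∧ Algebra.norm F (c + c⁻¹) = α ∧
      Algebra.trace F K (U • c + V • c⁻¹) = β) :
    (Q - 1) * Q * T.card ≤ Q ^ (2 * m) + cQ Q * Q ^ m := by
  obtain ⟨p, hp⟩ := CharP.exists F
  obtain ⟨f, hpp, hf⟩ := FiniteField.card F p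
  have : Fact p.Prime := ⟨hpp⟩
  have : CharP K p := charP_of_injective_algebraMap (algebraMap F K).injective p
  have hQ1 : 1 < Q := hQ ▸ Fintype.one_lt_card
  have hcard : Fintype.card K = Q ^ (2 * m) := by
    rw [← hQ, ← hfr]; exact Module.card_eq_pow_finrank
  have hcop : Nat.Coprime (Q - 1) Q := by
    have := Nat.coprime_self_add_right (m := Q - 1) (n := 1)
    rw [Nat.sub_add_cancel hQ1.le] at this
    simp [this]
  obtain ⟨E, _, _, Γ, _, v, x, y, z, h⟩ := exists_curve (K := K) (Q - 1) Q (algebraMap F K U)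
    (algebraMap F K V) ((_root_.map_ne_zero _).mpr hU) (by omega) hQ1 hcop
  obtain ⟨k, rfl⟩ : ∃ k, m = k + 3 := ⟨m - 3, by omega⟩
  set s := Q ^ (k + 3) with hs
  set L := Q ^ (k + 1) with hL
  have hsL : s = Q ^ 2 * L := by rw [hs, hL]; ring
  have hLQ : Q ≤ L := by rw [hL, pow_succ]; exact Nat.le_mul_of_pos_left _ (Nat.pow_pos (by omega))
  obtain ⟨d, rfl⟩ : ∃ d, Q = d + 1 := ⟨Q - 1, by omega⟩
  have hd : 0 < d := by omega
  simp only [Nat.add_sub_cancel] at h ⊢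
  set Q := d + 1 with hQd
  set C1 := 20 * Q ^ 3 with hC1
  set D := d * Q with hD
  have hD0 : 2 ≤ D := by rw [hD]; nlinarith
  have hdm := Nat.div_add_mod s D
  have hml := Nat.mod_lt s (show 0 < D by omega)
  set I0 := s / D with hI0
  have hI0s : I0 ≤ s := Nat.div_le_self _ _
  have hQs : Q ≤ s := by rw [hsL]; nlinarith
  have hQ3 : s * Q = Q ^ 3 * L := by rw [hsL]; ring
  have h1 : D * (L + 1) ≤ s := by
    rw [hD, hsL]; nlinarith
  have hR : (d + Q) * (s + 1) ≤ 4 * (s * Q) := by nlinarith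
  have hQ38 : 8 ≤ Q ^ 3 := by
    have : 2 ^ 3 ≤ Q ^ 3 := Nat.pow_le_pow_left (by omega) 3
    omega
  have hR2 : (d + Q) * (s + 1) ≤ 4 * (Q ^ 3 * L) := hQ3 ▸ hR
  have hsQ3 : s ≤ Q ^ 3 * L := by rw [← hQ3]; nlinarith
  have hC1L : C1 * 2 ≤ 20 * (Q ^ 3 * L) := by
    rw [hC1, mul_assoc]
    exact Nat.mul_le_mul_left _ (Nat.mul_le_mul_left _ (by omega))
  have h2 : 1 + L * s + (I0 + C1) + 2 * ((d + Q) * (s + 1)) < L * (I0 + C1) * D :=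
    arith_aux hdm hml.le hD0 (Nat.mul_le_mul_right L hQ38) (by rw [hC1]; ring) hC1L
      (hI0s.trans hsQ3) hR2 (by omega)
  have key := h.curve_count (p := p) (m := k + 3) (s := s) (L := L) (I := I0 + C1)
    ⟨f, hQ.symm.trans hf⟩ hcard ?_ rfl rfl h1 h2
    (algebraMap F K α) (algebraMap F K β) T ?_
  · refine key.trans ?_
    have hss : Q ^ (2 * (k + 3)) = s * s := by rw [hs]; ring
    rw [hss, cQ, Nat.add_sub_cancel, ← hD, ← hC1]
    have e1 : D * I0 ≤ s := by omega
    have e2 : s * (D * (I0 + C1 + 1)) = s * (D * I0) + s * (D * C1) + s * D := by ring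
    have e3 : s * (D * I0) ≤ s * s := Nat.mul_le_mul_left _ e1
    have e4 : D * ((d + Q) * (s + 1)) ≤ D * (4 * (s * Q)) := Nat.mul_le_mul_left _ hR
    rw [e2]
    have e5 : (D * (4 * Q + C1 + 1) + 1) * s = D * (4 * (s * Q)) + s * (D * C1) + s * D + s := by
      ring
    rw [e5]
    omega
  · have := Nat.sub_dvd_pow_sub_pow (d + 1) 1 (2 * (k + 3))
    simpa using this
  · intro c hc
    obtain ⟨a1, a2, a3, a4⟩ := hT c hc
    refine ⟨a1, a2, ?_, ?_⟩
    · rw [← a3, FiniteField.algebraMap_norm_eq_pow, Nat.card_eq_fintype_card, hcard,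
        Nat.card_eq_fintype_card, hQ]
      simp [hQd]
    · rw [← a4, FiniteField.algebraMap_trace_eq_sum_pow, hfr, Nat.card_eq_fintype_card, hQ]
      simp [Algebra.smul_def]

/-- The exponential sum over an extension. -/
noncomputable def SK (F : Type*) [Field F] (K : Type*) [Field K] [Fintype K] [Algebra F K]
    (χ : MulChar F ℂ) (ψ : AddChar F ℂ) (U V : F) : ℂ :=
  ∑ x : K, χ (Algebra.norm F (x + x⁻¹)) * ψ (Algebra.trace F K (U • x + V • x⁻¹))

lemma mulChar_norm_le {F : Type*} [Field F] [Finite F] (χ : MulChar F ℂ) (x : F) : ‖χ x‖ ≤ 1 := by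
  by_cases hx : x = 0
  · simp [hx, MulChar.map_zero]
  · have : Fintype F := Fintype.ofFinite F
    have h2 : χ x ^ (Fintype.card F - 1) = 1 := by
      rw [← map_pow, FiniteField.pow_card_sub_one_eq_one x hx, map_one]
    exact (Complex.norm_eq_one_of_pow_eq_one h2 (by
      have := Fintype.one_lt_card (α := F); omega)).le

lemma SK_even_bound_aux {F : Type*} [Field F] [Fintype F] {K : Type} [Field K] [Fintype K]
    [Algebra F K] {χ : MulChar F ℂ} {ψ : AddChar F ℂ} (hχψ : χ ≠ 1 ∨ ψ ≠ 1)
    {Q m : ℕ} (hQ : Fintype.card F = Q) (hm : 3 ≤ m) (hfr : Module.finrank F K = 2 * m)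
    {U : F} (hU : U ≠ 0) (V : F) :
    ‖SK F K χ ψ U V‖ ≤ (cQ Q + 3) * (Q : ℝ) ^ m := by
  classical
  have hQ1 : 1 < Q := hQ ▸ Fintype.one_lt_card
  have hcard : Fintype.card K = Q ^ (2 * m) := by
    rw [← hQ, ← hfr]; exact Module.card_eq_pow_finrank
  let G : Finset K := Finset.univ.filter fun c => c ≠ 0 ∧ c + c⁻¹ ≠ 0
  have hGc : Q ^ (2 * m) ≤ G.card + 3 := by
    have h1 : (Finset.univ.filter fun c : K => ¬ (c ≠ 0 ∧ c + c⁻¹ ≠ 0)).card ≤ 3 := by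
      have h2 : (Finset.univ.filter fun c : K => ¬ (c ≠ 0 ∧ c + c⁻¹ ≠ 0)) ⊆
          insert 0 (nthRoots 2 (-1 : K)).toFinset := by
        intro c hc
        simp only [Finset.mem_filter, Finset.mem_univ, true_and, not_and_or, not_not] at hc
        rw [Finset.mem_insert]
        by_cases h0 : c = 0
        · exact Or.inl h0
        right
        have := hc.resolve_left h0
        rw [Multiset.mem_toFinset, mem_nthRoots (by norm_num)]
        field_simp at this
        linear_combination this
      refine (Finset.card_le_card h2).trans ((Finset.card_insert_le _ _).trans ?_)
      have := (Multiset.toFinset_card_le _).trans (card_nthRoots 2 (-1 : K))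
      omega
    have h3 := Finset.card_filter_add_card_filter_not (s := (Finset.univ : Finset K))
      (fun c : K => c ≠ 0 ∧ c + c⁻¹ ≠ 0)
    rw [Finset.card_univ, hcard] at h3
    change G.card + _ = _ at h3
    omega
  let g : K → Fˣ × F := fun c => (if h : Algebra.norm F (c + c⁻¹) = 0 then 1 else
    Units.mk0 _ h, Algebra.trace F K (U • c + V • c⁻¹))
  let nn : Fˣ × F → ℕ := fun t => (G.filter fun c => g c = t).card
  have hg : ∀ c ∈ G, ((g c).1 : F) = Algebra.norm F (c + c⁻¹) := by
    intro c hc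
    simp only [G, Finset.mem_filter] at hc
    have : Algebra.norm F (c + c⁻¹) ≠ 0 := Algebra.norm_ne_zero_iff.mpr hc.2.2
    simp [g, this]
  have hS : SK F K χ ψ U V = ∑ t : Fˣ × F, χ (t.1 : F) * ψ t.2 * (nn t : ℂ) := by
    have h1 : SK F K χ ψ U V = ∑ c ∈ G, χ ((g c).1 : F) * ψ (g c).2 := by
      rw [SK]
      symm
      rw [Finset.sum_filter]
      refine Finset.sum_congr rfl fun c _ => ?_
      by_cases hc : c ≠ 0 ∧ c + c⁻¹ ≠ 0
      · rw [if_pos hc, hg c (by simp only [G, Finset.mem_filter]; exact ⟨Finset.mem_univ _, hc⟩)]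
      · rw [if_neg hc]
        have : c + c⁻¹ = 0 := by
          by_cases h0 : c = 0
          · simp [h0]
          · by_contra h; exact hc ⟨h0, h⟩
        rw [this, Algebra.norm_zero, MulChar.map_zero, zero_mul]
    rw [h1, ← Finset.sum_fiberwise_of_maps_to (t := Finset.univ) (g := g) (by simp)]
    refine Finset.sum_congr rfl fun t _ => ?_
    rw [Finset.sum_congr rfl (g := fun _ => χ (t.1 : F) * ψ t.2)]
    · rw [Finset.sum_const, nsmul_eq_mul, mul_comm]
    · intro c hc
      rw [(Finset.mem_filter.mp hc).2]
  have hD : ((Q - 1 : ℕ) * Q : ℝ) = Fintype.card (Fˣ × F) := by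
    rw [Fintype.card_prod, Fintype.card_units, hQ]; push_cast; ring
  have hDpos : (0 : ℝ) < Fintype.card (Fˣ × F) := by exact_mod_cast Fintype.card_pos
  set D : ℝ := ((Fintype.card (Fˣ × F) : ℕ) : ℝ) with hDdef
  set M : ℝ := ((Q : ℝ) ^ (2 * m) + cQ Q * (Q : ℝ) ^ m) / D with hM
  have hnM : ∀ t, (nn t : ℝ) ≤ M := by
    intro t
    rw [hM, le_div_iff₀ hDpos, mul_comm, ← hD]
    have := class_count hQ hm hfr hU V (t.1 : F) t.2 (G.filter fun c => g c = t) (by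
      intro c hc
      obtain ⟨h1, h2⟩ := Finset.mem_filter.mp hc
      have h3 := hg c h1
      simp only [G, Finset.mem_filter] at h1
      refine ⟨h1.2.1, h1.2.2, ?_, ?_⟩
      · rw [← h3, h2]
      · rw [← h2])
    exact_mod_cast this
  have hzero : ∑ t : Fˣ × F, χ (t.1 : F) * ψ t.2 = 0 := by
    rw [Fintype.sum_prod_type]
    simp_rw [← Finset.mul_sum]
    rw [← Finset.sum_mul]
    rcases hχψ with h | h
    · have : ∑ u : Fˣ, χ (u : F) = ∑ x : F, χ x := by
        rw [← Finset.sum_filter_of_ne (s := Finset.univ) (p := fun x : F => x ≠ 0) (f := fun x => χ x)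
          (by rintro x - hx rfl; exact hx χ.map_zero)]
        refine Finset.sum_bij (fun u _ => (u : F)) (by simp) (fun u _ v _ h => Units.ext h) ?_ (by simp)
        intro x hx
        exact ⟨Units.mk0 x (Finset.mem_filter.mp hx).2, Finset.mem_univ _, rfl⟩
      rw [this, MulChar.sum_eq_zero_of_ne_one h, zero_mul]
    · rw [AddChar.sum_eq_zero_of_ne_one h, mul_zero]
  have hS2 : SK F K χ ψ U V = ∑ t : Fˣ × F, χ (t.1 : F) * ψ t.2 * ((nn t : ℂ) - (M : ℂ)) := by
    simp_rw [mul_sub, Finset.sum_sub_distrib]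
    rw [← Finset.sum_mul, hzero, zero_mul, sub_zero, hS]
  rw [hS2]
  have hnsum : ∑ t, (nn t : ℝ) = G.card := by
    have := Finset.card_eq_sum_card_fiberwise (s := G) (t := (Finset.univ : Finset (Fˣ × F)))
      (f := g) (by intro; simp)
    rw [this]; push_cast; rfl
  have hb : ‖∑ t : Fˣ × F, χ (t.1 : F) * ψ t.2 * ((nn t : ℂ) - (M : ℂ))‖ ≤ ∑ t : Fˣ × F, (M - nn t) := by
    refine norm_sum_le_of_le _ fun t _ => ?_
    rw [norm_mul, norm_mul, AddChar.norm_apply]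
    have h1 : ‖χ (t.1 : F)‖ ≤ 1 := by
      exact mulChar_norm_le _ _
    have h2 : ‖(nn t : ℂ) - (M : ℂ)‖ = M - nn t := by
      rw [← Complex.ofReal_natCast, ← Complex.ofReal_sub, Complex.norm_real, Real.norm_eq_abs,
        abs_sub_comm, abs_of_nonneg (sub_nonneg.mpr (hnM t))]
    rw [h2, mul_one]
    nlinarith [hnM t]
  refine hb.trans ?_
  rw [Finset.sum_sub_distrib, hnsum, Finset.sum_const, Finset.card_univ, nsmul_eq_mul, ← hDdef, hM,
    mul_div_cancel₀ _ hDpos.ne']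
  have hGc' : (Q : ℝ) ^ (2 * m) ≤ G.card + 3 := by exact_mod_cast hGc
  have : (1 : ℝ) ≤ (Q : ℝ) ^ m := one_le_pow₀ (by exact_mod_cast hQ1.le)
  nlinarith

lemma SK_even_bound {F : Type*} [Field F] [Fintype F] {K : Type} [Field K] [Fintype K]
    [Algebra F K] {χ : MulChar F ℂ} {ψ : AddChar F ℂ} (hχψ : χ ≠ 1 ∨ ψ ≠ 1)
    {Q m : ℕ} (hQ : Fintype.card F = Q) (hfr : Module.finrank F K = 2 * m)
    {U : F} (hU : U ≠ 0) (V : F) :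
    ‖SK F K χ ψ U V‖ ≤ (cQ Q + 3 + Q ^ 2) * (Q : ℝ) ^ m := by
  have hQ1 : 1 < Q := hQ ▸ Fintype.one_lt_card
  have hQ1' : (1 : ℝ) ≤ Q := by exact_mod_cast hQ1.le
  by_cases hm : 3 ≤ m
  · refine (SK_even_bound_aux hχψ hQ hm hfr hU V).trans ?_
    refine mul_le_mul_of_nonneg_right ?_ (by positivity)
    nlinarith [sq_nonneg (Q : ℝ)]
  · have hcard : Fintype.card K = Q ^ (2 * m) := by
      rw [← hQ, ← hfr]; exact Module.card_eq_pow_finrank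
    have h1 : ‖SK F K χ ψ U V‖ ≤ (Q : ℝ) ^ (2 * m) := by
      refine (norm_sum_le_of_le (f := fun x : K => _) (n := fun _ => (1 : ℝ)) _ fun x _ => ?_).trans ?_
      · rw [norm_mul, AddChar.norm_apply, mul_one]
        exact mulChar_norm_le _ _
      · simp [hcard]
    refine h1.trans ?_
    rw [two_mul, pow_add]
    refine mul_le_mul_of_nonneg_right ?_ (by positivity)
    have : (Q : ℝ) ^ m ≤ Q ^ 2 := pow_le_pow_right₀ hQ1' (by omega)
    have : (0 : ℝ) ≤ cQ Q := by positivity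
    linarith


section Lam
variable {R : Type*} [Field R]

/-- The matrix with square `-1`. -/
def matJ (R : Type*) [Field R] : Matrix (Fin 2) (Fin 2) R := !![0, -1; 1, 0]

/-- The resultant with `X ^ 2 + 1`. -/
noncomputable def rho (h : R[X]) : R := (aeval (matJ R) h).det

/-- Product of `r + r⁻¹` over the roots. -/
noncomputable def cc (h : R[X]) : R := rho h * ((-1) ^ h.natDegree * h.coeff 0)⁻¹

/-- Sum of `U r + V r⁻¹` over the roots. -/
noncomputable def tt (U V : R) (h : R[X]) : R := -U * h.nextCoeff - V * h.coeff 1 / h.coeff 0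

lemma rho_mul (f g : R[X]) : rho (f * g) = rho f * rho g := by
  simp [rho, Matrix.det_mul]

lemma matJ_sq : (matJ R) ^ 2 + 1 = 0 := by
  ext i j
  fin_cases i <;> fin_cases j <;> simp [matJ, pow_two]

lemma rho_add (f g : R[X]) : rho (f + g * (X ^ 2 + 1)) = rho f := by
  have : aeval (matJ R) (X ^ 2 + 1 : R[X]) = 0 := by
    simp [matJ_sq]
  simp only [rho, map_add, map_mul]
  simp only [map_add] at this
  rw [this, mul_zero, add_zero]

lemma rho_X_sub_C (r : R) : rho (X - C r) = r ^ 2 + 1 := by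
  simp only [rho, map_sub, aeval_X, aeval_C, Matrix.det_fin_two, Matrix.algebraMap_eq_diagonal]
  simp [matJ]
  ring

lemma rho_map {S : Type*} [Field S] (φ : R →+* S) (h : R[X]) : rho (h.map φ) = φ (rho h) := by
  rw [rho, rho, RingHom.map_det, aeval_def, aeval_def, eval₂_map]
  congr 1
  have h1 : φ.mapMatrix (matJ R) = matJ S := by
    ext i j
    fin_cases i <;> fin_cases j <;> simp [matJ]
  rw [hom_eval₂, h1]
  congr 1
  ext c i j
  by_cases hij : i = j <;> simp [Matrix.algebraMap_matrix_apply, hij]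

lemma rho_one : rho (1 : R[X]) = 1 := by simp [rho]

lemma cc_one : cc (1 : R[X]) = 1 := by simp [cc, rho_one]

lemma cc_mul {f g : R[X]} (hf : f.Monic) (hg : g.Monic) : cc (f * g) = cc f * cc g := by
  simp only [cc, rho_mul, hf.natDegree_mul hg, mul_coeff_zero, pow_add, mul_inv]
  ring

lemma cc_eq_zero {f : R[X]} (hf : f.coeff 0 = 0) : cc f = 0 := by simp [cc, hf]

lemma cc_map {S : Type*} [Field S] (φ : R →+* S) (h : R[X]) : cc (h.map φ) = φ (cc h) := by
  simp [cc, rho_map]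

lemma cc_X_sub_C (r : R) : cc (X - C r) = r + r⁻¹ := by
  by_cases h : r = 0
  · simp [cc, h]
  · simp [cc, rho_X_sub_C]
    field_simp

lemma tt_one (U V : R) : tt U V (1 : R[X]) = 0 := by
  simp [tt, nextCoeff, coeff_one]

lemma tt_mul (U V : R) {f g : R[X]} (hf : f.Monic) (hg : g.Monic) (hf0 : f.coeff 0 ≠ 0)
    (hg0 : g.coeff 0 ≠ 0) : tt U V (f * g) = tt U V f + tt U V g := by
  simp only [tt, hf.nextCoeff_mul hg, mul_coeff_zero, mul_coeff_one]
  field_simp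
  ring

lemma tt_map {S : Type*} [Field S] (φ : R →+* S) (U V : R) (h : R[X]) :
    tt (φ U) (φ V) (h.map φ) = φ (tt U V h) := by
  simp [tt, nextCoeff_map φ.injective]

lemma tt_X_sub_C (U V r : R) : tt U V (X - C r) = U * r + V * r⁻¹ := by
  simp [tt, nextCoeff_X_sub_C]
  ring_nf

lemma cc_prod (s : Multiset R) : cc (s.map fun r => X - C r).prod = (s.map fun r => r + r⁻¹).prod := by
  induction s using Multiset.induction_on with
  | empty => simp [cc_one]
  | cons a s ih =>
    rw [Multiset.map_cons, Multiset.prod_cons, cc_mul (monic_X_sub_C a)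
      (monic_multiset_prod_of_monic _ _ fun i _ => monic_X_sub_C i), ih, cc_X_sub_C]
    simp

lemma tt_prod (U V : R) (s : Multiset R) (h0 : (0 : R) ∉ s) :
    tt U V (s.map fun r => X - C r).prod = (s.map fun r => U * r + V * r⁻¹).sum ∧
      (s.map fun r => X - C r).prod.coeff 0 ≠ 0 := by
  induction s using Multiset.induction_on with
  | empty => simp [tt_one]
  | cons a s ih =>
    simp only [Multiset.mem_cons, not_or] at h0
    obtain ⟨i1, i2⟩ := ih h0.2
    have ha : (X - C a : R[X]).coeff 0 ≠ 0 := by simpa using Ne.symm h0.1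
    rw [Multiset.map_cons, Multiset.prod_cons, tt_mul U V (monic_X_sub_C a)
      (monic_multiset_prod_of_monic _ _ fun i _ => monic_X_sub_C i) ha i2, i1, tt_X_sub_C]
    refine ⟨by simp, ?_⟩
    rw [mul_coeff_zero]
    exact mul_ne_zero ha i2

end Lam

/-- The multiplicative function on monic polynomials. -/
noncomputable def Lam {F : Type*} [Field F] (χ : MulChar F ℂ) (ψ : AddChar F ℂ) (U V : F)
    (h : F[X]) : ℂ := χ (cc h) * ψ (tt U V h)

section
variable {F : Type*} [Field F] (χ : MulChar F ℂ) (ψ : AddChar F ℂ) (U V : F)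

lemma Lam_mul {f g : F[X]} (hf : f.Monic) (hg : g.Monic) :
    Lam χ ψ U V (f * g) = Lam χ ψ U V f * Lam χ ψ U V g := by
  by_cases hf0 : f.coeff 0 = 0
  · simp [Lam, cc_eq_zero hf0, cc_mul hf hg, MulChar.map_zero]
  by_cases hg0 : g.coeff 0 = 0
  · simp [Lam, cc_eq_zero hg0, cc_mul hf hg, MulChar.map_zero]
  · simp only [Lam, cc_mul hf hg, tt_mul U V hf hg hf0 hg0, map_mul, AddChar.map_add_eq_mul]
    ring

lemma Lam_one : Lam χ ψ U V (1 : F[X]) = 1 := by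
  simp [Lam, cc_one, tt_one]

lemma Lam_pow {f : F[X]} (hf : f.Monic) (k : ℕ) :
    Lam χ ψ U V (f ^ k) = Lam χ ψ U V f ^ k := by
  induction k with
  | zero => simp [Lam_one]
  | succ k ih => rw [pow_succ, Lam_mul _ _ _ _ (hf.pow k) hf, ih, pow_succ]

lemma Lam_X_sub_C (r : F) : Lam χ ψ U V (X - C r) = χ (r + r⁻¹) * ψ (U * r + V * r⁻¹) := by
  rw [Lam, cc_X_sub_C, tt_X_sub_C]

/-- The characteristic polynomial of `x`. -/
noncomputable def cpx (F : Type*) [Field F] {K : Type*} [Field K] [Algebra F K] (x : K) : F[X] :=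
  (minpoly F x) ^ (Module.finrank F K / (minpoly F x).natDegree)

open IntermediateField in
lemma Lam_cpx [Finite F] {K : Type*} [Field K] [Fintype K] [Algebra F K] (x : K) :
    Lam χ ψ U V (cpx F x) =
      χ (Algebra.norm F (x + x⁻¹)) * ψ (Algebra.trace F K (U • x + V • x⁻¹)) := by
  have hxint : IsIntegral F x := Algebra.IsIntegral.isIntegral x
  have hmon := minpoly.monic hxint
  by_cases hx0 : x = 0
  · subst hx0
    have h1 : Lam χ ψ U V (minpoly F (0 : K)) = 0 := by
      simp [Lam, cc, MulChar.map_zero]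
    rw [cpx, Lam_pow _ _ _ _ hmon, h1]
    rw [minpoly.zero, natDegree_X, Nat.div_one, zero_pow Module.finrank_pos.ne']
    simp [MulChar.map_zero]
  let L := F⟮x⟯
  let g : L := AdjoinSimple.gen F x
  let Ω := AlgebraicClosure F
  have hfin : Module.finrank F L = (minpoly F x).natDegree := adjoin.finrank hxint
  have hdiv : Module.finrank F K / (minpoly F x).natDegree = Module.finrank L K := by
    rw [← Module.finrank_mul_finrank F L K, hfin]
    exact Nat.mul_div_cancel_left _ (minpoly.natDegree_pos hxint)
  have hgx : algebraMap L K g = x := AdjoinSimple.algebraMap_gen F x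
  have hN : Algebra.norm F (x + x⁻¹) = Algebra.norm F (g + g⁻¹) ^ Module.finrank L K := by
    rw [← Algebra.norm_norm (S := L), ← hgx, ← map_inv₀, ← map_add, Algebra.norm_algebraMap, map_pow]
  have hT : Algebra.trace F K (U • x + V • x⁻¹) =
      Module.finrank L K • Algebra.trace F L (U • g + V • g⁻¹) := by
    have e : U • x + V • x⁻¹ = algebraMap L K (U • g + V • g⁻¹) := by
      rw [map_add, ← hgx, ← map_inv₀]; rfl
    rw [← Algebra.trace_trace (S := L), e, Algebra.trace_algebraMap, map_nsmul]
  have hmg : minpoly F g = minpoly F x := minpoly_gen F x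
  have hne : minpoly F x ≠ 0 := hmon.ne_zero
  let pb := adjoin.powerBasis hxint
  have hpb : pb.gen = g := adjoin.powerBasis_gen hxint
  have hemb0 : (Finset.univ.val.map fun σ : L →ₐ[F] Ω => σ g) = (minpoly F x).aroots Ω := by
    refine (Multiset.Nodup.ext ?_ ?_).mpr ?_
    · refine Finset.univ.nodup.map fun σ τ h => pb.algHom_ext (by rw [hpb]; exact h)
    · exact nodup_roots (Separable.map (Algebra.IsSeparable.isSeparable F x))
    · intro r
      rw [Multiset.mem_map, mem_aroots]
      constructor
      · rintro ⟨σ, -, rfl⟩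
        exact ⟨hne, by rw [← hmg, aeval_algHom_apply, minpoly.aeval, map_zero]⟩
      · rintro ⟨-, hr⟩
        refine ⟨pb.lift r (by rw [hpb, hmg, hr]), Finset.mem_univ _, ?_⟩
        exact pb.lift_gen r (by rw [hpb, hmg, hr])
  have hemb : ∀ (f : Ω → Ω), (Finset.univ.val.map fun σ : L →ₐ[F] Ω => f (σ g)) =
      ((minpoly F x).aroots Ω).map f := by
    intro f
    rw [← hemb0, Multiset.map_map]
    rfl
  have hsplit : (minpoly F x).map (algebraMap F Ω) =
      (((minpoly F x).aroots Ω).map fun r => X - C r).prod :=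
    (IsAlgClosed.splits _).eq_prod_roots_of_monic (hmon.map _)
  have hc : cc (minpoly F x) = Algebra.norm F (g + g⁻¹) := by
    apply (algebraMap F Ω).injective
    rw [← cc_map, hsplit, cc_prod, Algebra.norm_eq_prod_embeddings, ← hemb]
    simp
  have ht : tt U V (minpoly F x) = Algebra.trace F L (U • g + V • g⁻¹) := by
    apply (algebraMap F Ω).injective
    rw [← tt_map, hsplit, (tt_prod _ _ _ _).1, trace_eq_sum_embeddings, ← hemb]
    · simp [Algebra.smul_def]
    · rw [mem_aroots, not_and]
      intro _ h0
      rw [aeval_def, eval₂_at_zero] at h0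
      exact minpoly.coeff_zero_ne_zero hxint hx0 ((algebraMap F Ω).injective (by rw [h0, map_zero]))
  rw [cpx, hdiv, Lam_pow _ _ _ _ hmon, Lam, hc, ht, hN, hT, map_pow, AddChar.map_nsmul_eq_pow,
    mul_pow]
end


lemma finite_monic (F : Type*) [Field F] [Finite F] (k : ℕ) :
    {h : F[X] | h.Monic ∧ h.natDegree = k}.Finite := by
  have : Finite (degreeLT F (k + 1)) := Finite.of_equiv _ (degreeLTEquiv F (k + 1)).symm.toEquiv
  refine Set.Finite.subset (Set.toFinite (degreeLT F (k + 1) : Set F[X])) ?_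
  rintro h ⟨h1, h2⟩
  rw [SetLike.mem_coe, mem_degreeLT, degree_eq_natDegree h1.ne_zero, h2]
  exact_mod_cast Nat.lt_succ_self k

/-- The monic polynomials of degree `k`. -/
noncomputable def Mon (F : Type*) [Field F] [Finite F] (k : ℕ) : Finset F[X] :=
  (finite_monic F k).toFinset

lemma mem_Mon {F : Type*} [Field F] [Finite F] {k : ℕ} {h : F[X]} :
    h ∈ Mon F k ↔ h.Monic ∧ h.natDegree = k := by
  simp [Mon]

open Classical in
lemma card_minpoly_eq {F : Type*} [Field F] [Finite F] {K : Type*} [Field K] [Fintype K]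
    [Algebra F K] {P : F[X]} (hP : Irreducible P) (hm : P.Monic) :
    (Finset.univ.filter fun x : K => minpoly F x = P).card =
      if P.natDegree ∣ Module.finrank F K then P.natDegree else 0 := by
  have : Fintype F := Fintype.ofFinite F
  split_ifs with hd
  · rw [hP.natDegree_dvd_iff_dvd_X_pow_card_pow_sub_X, Nat.card_eq_fintype_card,
      ← Module.card_eq_pow_finrank] at hd
    have hs : (P.map (algebraMap F K)).Splits := by
      refine Splits.of_dvd (FiniteField.isSplittingField_sub K F).splits ?_
        (Polynomial.map_dvd (algebraMap F K) hd)
      simp only [Polynomial.map_sub, Polynomial.map_pow, Polynomial.map_X]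
      exact FiniteField.X_pow_card_sub_X_ne_zero K Fintype.one_lt_card
    rw [← card_rootSet_eq_natDegree (PerfectField.separable_of_irreducible hP) hs,
      Fintype.card_subtype]
    congr 1
    ext x
    simp only [Finset.mem_filter, Finset.mem_univ, true_and, mem_rootSet]
    constructor
    · rintro rfl
      exact ⟨hm.ne_zero, minpoly.aeval _ _⟩
    · rintro ⟨-, h⟩
      exact (minpoly.eq_of_irreducible_of_monic hP h hm).symm
  · rw [Finset.card_eq_zero, Finset.filter_eq_empty_iff]
    rintro x - rfl
    exact hd (minpoly.degree_dvd (Algebra.IsIntegral.isIntegral x))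

lemma card_mult {e m k : ℕ} (he : 0 < e) (hk : e * m ≤ k) :
    ((Finset.range k).filter fun i => e ∣ i + 1 ∧ (i + 1) / e ≤ m).card = m := by
  conv_rhs => rw [← Finset.card_range m]
  symm
  refine Finset.card_bij (fun r _ => e * (r + 1) - 1) ?_ ?_ ?_
  · intro r hr
    rw [Finset.mem_range] at hr
    have h1 : e * (r + 1) ≤ e * m := Nat.mul_le_mul_left _ hr
    have h2 : 0 < e * (r + 1) := by positivity
    rw [Finset.mem_filter, Finset.mem_range, Nat.sub_add_cancel h2]
    refine ⟨by omega, dvd_mul_right _ _, ?_⟩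
    rw [Nat.mul_div_cancel_left _ he]; exact hr
  · intro r _ r' _ h
    have h2 : 0 < e * (r + 1) := by positivity
    have h3 : 0 < e * (r' + 1) := by positivity
    have : e * (r + 1) = e * (r' + 1) := by omega
    have := Nat.eq_of_mul_eq_mul_left he this
    omega
  · intro i hi
    rw [Finset.mem_filter, Finset.mem_range] at hi
    obtain ⟨h1, ⟨c, hc⟩, h3⟩ := hi
    rw [hc, Nat.mul_div_cancel_left _ he] at h3
    have hc0 : c ≠ 0 := by rintro rfl; simp at hc
    refine ⟨c - 1, by rw [Finset.mem_range]; omega, ?_⟩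
    rw [Nat.sub_add_cancel (by omega), ← hc]; omega

noncomputable instance (F : Type*) [Field F] [Finite F] (p : ℕ) [Fact p.Prime] [CharP F p] (n : ℕ)
    [NeZero n] : Fintype (FiniteField.Extension F p n) := Fintype.ofFinite _

set_option maxHeartbeats 1000000 in
open Classical in
lemma core_count {F : Type*} [Field F] [Finite F] (p : ℕ) [Fact p.Prime] [CharP F p]
    {k : ℕ} {h : F[X]} (hh : h ∈ Mon F k) :
    ∑ i ∈ Finset.range k,
      (Finset.univ.filter fun x : FiniteField.Extension F p (i + 1) => cpx F x ∣ h).card = k := by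
  obtain ⟨hm, hk⟩ := mem_Mon.mp hh
  have hne := hm.ne_zero
  let N := UniqueFactorizationMonoid.normalizedFactors h
  have hirr : ∀ P ∈ N, Irreducible P := fun P hP =>
    UniqueFactorizationMonoid.irreducible_of_normalized_factor P hP
  have hnorm : ∀ P ∈ N, normalize P = P := fun P hP =>
    UniqueFactorizationMonoid.normalize_normalized_factor P hP
  have hmon : ∀ P ∈ N, P.Monic := fun P hP => by
    rw [← hnorm P hP]; exact monic_normalize (hirr P hP).ne_zero
  have hprod : N.prod = h := by
    rw [UniqueFactorizationMonoid.prod_normalizedFactors_eq hne, hm.normalize_eq_self]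
  have hsum : ∑ P ∈ N.toFinset, N.count P * P.natDegree = k := by
    rw [← hk, ← hprod, natDegree_multiset_prod_of_monic _ hmon, Finset.sum_multiset_map_count]
    simp
  have hpow : ∀ P ∈ N, ∀ r : ℕ, P ^ r ∣ h ↔ r ≤ N.count P := by
    intro P hP r
    rw [pow_dvd_iff_le_emultiplicity,
      UniqueFactorizationMonoid.emultiplicity_eq_count_normalizedFactors (hirr P hP) hne, hnorm P hP]
    exact_mod_cast Iff.rfl
  have h1 : ∀ i ∈ Finset.range k,
      (Finset.univ.filter fun x : FiniteField.Extension F p (i + 1) => cpx F x ∣ h).card =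
      ∑ P ∈ N.toFinset, if P.natDegree ∣ i + 1 ∧ (i + 1) / P.natDegree ≤ N.count P then
        P.natDegree else 0 := by
    intro i _
    have hfr : Module.finrank F (FiniteField.Extension F p (i + 1)) = i + 1 :=
      FiniteField.finrank_extension F p (i + 1)
    rw [Finset.card_eq_sum_card_fiberwise (f := fun x => minpoly F x) (t := N.toFinset)]
    · refine Finset.sum_congr rfl fun P hP => ?_
      rw [Multiset.mem_toFinset] at hP
      have hc := card_minpoly_eq (K := FiniteField.Extension F p (i + 1)) (hirr P hP) (hmon P hP)
      rw [hfr] at hc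
      rw [Finset.filter_filter]
      by_cases hle : (i + 1) / P.natDegree ≤ N.count P
      · simp only [hle, and_true]
        rw [← hc]
        congr 1
        ext x
        simp only [Finset.mem_filter, Finset.mem_univ, true_and, and_iff_right_iff_imp]
        rintro rfl
        rw [cpx, hfr, hpow _ hP]
        exact hle
      · simp only [hle, and_false, if_false]
        rw [Finset.card_eq_zero, Finset.filter_eq_empty_iff]
        rintro x - ⟨h1, rfl⟩
        rw [cpx, hfr, hpow _ hP] at h1
        exact hle h1
    · intro x hx
      simp only [Finset.coe_filter, Finset.mem_univ, true_and, Set.mem_ofPred_eq] at hx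
      have hxint : IsIntegral F x := Algebra.IsIntegral.isIntegral x
      simp only [SetLike.mem_coe, Multiset.mem_toFinset]
      have hd : minpoly F x ∣ h := by
        refine dvd_trans (dvd_pow_self _ ?_) hx
        rw [hfr]
        have h2 := minpoly.degree_dvd hxint
        rw [hfr] at h2
        exact (Nat.div_pos (Nat.le_of_dvd (Nat.succ_pos _) h2) (minpoly.natDegree_pos hxint)).ne'
      have := (UniqueFactorizationMonoid.mem_normalizedFactors_iff' hne).mpr
        ⟨minpoly.irreducible hxint, (minpoly.monic hxint).normalize_eq_self, hd⟩
      exact this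
  rw [Finset.sum_congr rfl h1, Finset.sum_comm]
  conv_rhs => rw [← hsum]
  refine Finset.sum_congr rfl fun P hP => ?_
  rw [← Finset.sum_filter, Finset.sum_const, smul_eq_mul, card_mult]
  · exact (hirr P (Multiset.mem_toFinset.mp hP)).natDegree_pos
  · calc _ = N.count P * P.natDegree := mul_comm _ _
      _ ≤ ∑ P ∈ N.toFinset, N.count P * P.natDegree :=
        Finset.single_le_sum (f := fun P => N.count P * P.natDegree) (fun _ _ => Nat.zero_le _) hP
      _ = k := hsum

/-- Coefficients of the L-function. -/
noncomputable def AA {F : Type*} [Field F] [Finite F] (χ : MulChar F ℂ) (ψ : AddChar F ℂ)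
    (U V : F) (k : ℕ) : ℂ := ∑ h ∈ Mon F k, Lam χ ψ U V h

lemma cpx_monic {F : Type*} [Field F] {K : Type*} [Field K] [Finite K] [Algebra F K] (x : K) :
    (cpx F x).Monic := (minpoly.monic (Algebra.IsIntegral.isIntegral x)).pow _

lemma cpx_natDegree {F : Type*} [Field F] {K : Type*} [Field K] [Finite K] [Algebra F K] (x : K) :
    (cpx F x).natDegree = Module.finrank F K := by
  rw [cpx, (minpoly.monic (Algebra.IsIntegral.isIntegral x)).natDegree_pow]
  exact Nat.div_mul_cancel (minpoly.degree_dvd (Algebra.IsIntegral.isIntegral x))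

open Classical in
lemma sum_dvd {F : Type*} [Field F] [Finite F] (χ : MulChar F ℂ) (ψ : AddChar F ℂ)
    (U V : F) {j k : ℕ} (hjk : j ≤ k) {g : F[X]} (hg : g ∈ Mon F j) :
    ∑ h ∈ (Mon F k).filter (fun h => g ∣ h), Lam χ ψ U V h =
      Lam χ ψ U V g * AA χ ψ U V (k - j) := by
  obtain ⟨hm, hj⟩ := mem_Mon.mp hg
  rw [AA, Finset.mul_sum]
  symm
  refine Finset.sum_bij (fun h _ => g * h) ?_ ?_ ?_ ?_
  · intro h hh
    obtain ⟨h1, h2⟩ := mem_Mon.mp hh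
    rw [Finset.mem_filter, mem_Mon, hm.natDegree_mul h1, hj, h2]
    exact ⟨⟨hm.mul h1, by omega⟩, dvd_mul_right _ _⟩
  · intro h _ h' _ e
    exact mul_left_cancel₀ hm.ne_zero e
  · intro h hh
    rw [Finset.mem_filter, mem_Mon] at hh
    obtain ⟨⟨h1, h2⟩, c, rfl⟩ := hh
    have hc : c.Monic := hm.of_mul_monic_left h1
    rw [hm.natDegree_mul hc, hj] at h2
    exact ⟨c, mem_Mon.mpr ⟨hc, by omega⟩, rfl⟩
  · intro h hh
    rw [Lam_mul _ _ _ _ hm (mem_Mon.mp hh).1]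

lemma newton {F : Type*} [Field F] [Finite F] (p : ℕ) [Fact p.Prime] [CharP F p]
    (χ : MulChar F ℂ) (ψ : AddChar F ℂ) (U V : F) (k : ℕ) :
    k * AA χ ψ U V k = ∑ i ∈ Finset.range k,
      SK F (FiniteField.Extension F p (i + 1)) χ ψ U V * AA χ ψ U V (k - (i + 1)) := by
  classical
  have h1 : k * AA χ ψ U V k = ∑ h ∈ Mon F k, ∑ i ∈ Finset.range k,
      ∑ x : FiniteField.Extension F p (i + 1), if cpx F x ∣ h then Lam χ ψ U V h else 0 := by
    rw [AA, Finset.mul_sum]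
    refine Finset.sum_congr rfl fun h hh => ?_
    conv_lhs => rw [← core_count p hh]
    push_cast
    rw [Finset.sum_mul]
    refine Finset.sum_congr rfl fun i _ => ?_
    rw [← Finset.sum_filter, Finset.sum_const, nsmul_eq_mul]
  rw [h1, Finset.sum_comm]
  refine Finset.sum_congr rfl fun i hi => ?_
  rw [Finset.mem_range] at hi
  rw [Finset.sum_comm, SK, Finset.sum_mul]
  refine Finset.sum_congr rfl fun x _ => ?_
  rw [← Finset.sum_filter, sum_dvd χ ψ U V (j := i + 1) hi, Lam_cpx]
  rw [mem_Mon]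
  exact ⟨cpx_monic x, by rw [cpx_natDegree, FiniteField.finrank_extension]⟩


lemma sum_zero_of_twist {α : Type*} (s : Finset α) (f : α → ℂ) (τ τ' : α → α) (c : ℂ) (hc : c ≠ 1)
    (h1 : ∀ x ∈ s, τ x ∈ s) (h2 : ∀ x ∈ s, τ' x ∈ s) (h3 : ∀ x ∈ s, τ' (τ x) = x)
    (h4 : ∀ x ∈ s, τ (τ' x) = x) (h5 : ∀ x ∈ s, f (τ x) = c * f x) : ∑ x ∈ s, f x = 0 := by
  have h : ∑ x ∈ s, c * f x = ∑ x ∈ s, f x :=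
    Finset.sum_nbij' τ τ' h1 h2 h3 h4 (fun x hx => (h5 x hx).symm)
  rw [← Finset.mul_sum] at h
  have : (c - 1) * ∑ x ∈ s, f x = 0 := by rw [sub_mul, h]; ring
  exact (mul_eq_zero.mp this).resolve_left (sub_ne_zero.mpr hc)

section
variable {F : Type*} [Field F] [Finite F]

lemma add_mem_Mon {k : ℕ} {h g : F[X]} (hh : h ∈ Mon F k) (hg : g.degree < k) : h + g ∈ Mon F k := by
  obtain ⟨h1, h2⟩ := mem_Mon.mp hh
  have hd : g.degree < h.degree := by rwa [degree_eq_natDegree h1.ne_zero, h2]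
  rw [mem_Mon]
  refine ⟨h1.add_of_left hd, ?_⟩
  rw [natDegree_add_eq_left_of_degree_lt hd, h2]

lemma degree_pert (c : F) (j : ℕ) : (C c * X ^ j * (X ^ 2 + 1)).degree < ((j + 3 : ℕ) : WithBot ℕ) := by
  have h2 : (X ^ 2 + 1 : F[X]).degree ≤ 2 := by compute_degree
  have h3 := degree_C_mul_X_pow_le j c
  have h4 : (C c * X ^ j * (X ^ 2 + 1)).degree ≤ ((j + 2 : ℕ) : WithBot ℕ) := by
    refine (degree_mul_le _ _).trans ?_
    push_cast
    exact add_le_add h3 h2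
  exact h4.trans_lt (by exact_mod_cast Nat.lt_succ_self _)

lemma AA_vanish_psi {χ : MulChar F ℂ} {ψ : AddChar F ℂ} (hψ : ψ ≠ 1) {U : F} (hU : U ≠ 0) (V : F)
    {k : ℕ} (hk : 5 ≤ k) : AA χ ψ U V k = 0 := by
  obtain ⟨c0, hc0⟩ := AddChar.ne_one_iff.mp hψ
  obtain ⟨j, rfl⟩ : ∃ j, k = j + 5 := ⟨k - 5, by omega⟩
  let g : F → F[X] := fun c => C c * X ^ (j + 2) * (X ^ 2 + 1)
  refine sum_zero_of_twist _ _ (fun h => h + g (-c0 / U)) (fun h => h + g (-(-c0 / U))) (ψ c0) hc0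
    ?_ ?_ ?_ ?_ ?_
  · intro h hh; exact add_mem_Mon hh (degree_pert _ _)
  · intro h hh; exact add_mem_Mon hh (degree_pert _ _)
  · intro h _; simp [g]
  · intro h _; simp [g]
  · intro h hh
    have hh' : h + g (-c0 / U) ∈ Mon F (j + 5) := add_mem_Mon hh (degree_pert _ _)
    obtain ⟨h1, h2⟩ := mem_Mon.mp hh
    obtain ⟨h3, h4⟩ := mem_Mon.mp hh'
    have hg : g (-c0 / U) = C (-c0 / U) * X ^ (j + 4) + C (-c0 / U) * X ^ (j + 2) := by
      simp only [g]; ring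
    have e0 : (h + g (-c0 / U)).coeff 0 = h.coeff 0 := by
      rw [hg]; simp [coeff_X_pow]
    have e1 : (h + g (-c0 / U)).coeff 1 = h.coeff 1 := by
      rw [hg]; simp [coeff_X_pow]
    have e2 : (h + g (-c0 / U)).nextCoeff = h.nextCoeff + -c0 / U := by
      rw [nextCoeff_of_natDegree_pos (by omega), nextCoeff_of_natDegree_pos (by omega), h2, h4, hg]
      simp [coeff_X_pow]
    have e3 : cc (h + g (-c0 / U)) = cc h := by
      simp only [cc]
      rw [e0, h2, h4, rho_add]
    rw [Lam, Lam, e3]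
    have e4 : tt U V (h + g (-c0 / U)) = c0 + tt U V h := by
      simp only [tt]
      rw [e0, e1, e2]
      field_simp
      ring
    rw [e4, AddChar.map_add_eq_mul]
    ring

lemma AA_vanish_chi {χ : MulChar F ℂ} (hχ : χ ≠ 1) (U V : F)
    {k : ℕ} (hk : 3 ≤ k) : AA χ 1 U V k = 0 := by
  obtain ⟨l, hl⟩ := MulChar.ne_one_iff.mp hχ
  let g : F[X] → F → F[X] := fun h c => C ((c - 1) * h.coeff 0) * X ^ 0 * (X ^ 2 + 1)
  have hgc : ∀ h c, (h + g h c).coeff 0 = c * h.coeff 0 := by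
    intro h c
    simp [g]
    ring
  have hmem : ∀ h c, h ∈ Mon F k → h + g h c ∈ Mon F k := fun h c hh =>
    add_mem_Mon hh ((degree_pert _ _).trans_le (by exact_mod_cast hk))
  have hinv : ∀ h (c d : F), d * c = 1 → (h + g h c) + g (h + g h c) d = h := by
    intro h c d hdc
    have : g h c + g (h + g h c) d = 0 := by
      simp only [g]
      rw [← add_mul, ← add_mul, ← C_add, hgc]
      have : (c - 1) * h.coeff 0 + (d - 1) * (c * h.coeff 0) = 0 := by
        linear_combination (h.coeff 0) * hdc
      rw [this]; simp
    rw [add_assoc, this, add_zero]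
  refine sum_zero_of_twist _ _ (fun h => h + g h (l⁻¹ : Fˣ)) (fun h => h + g h l) (χ l) hl
    ?_ ?_ ?_ ?_ ?_
  · intro h hh; exact hmem _ _ hh
  · intro h hh; exact hmem _ _ hh
  · intro h _; exact hinv _ _ _ (by simp)
  · intro h _; exact hinv _ _ _ (by simp)
  · intro h hh
    obtain ⟨h1, h2⟩ := mem_Mon.mp hh
    obtain ⟨h3, h4⟩ := mem_Mon.mp (hmem h (l⁻¹ : Fˣ) hh)
    have e3 : cc (h + g h (l⁻¹ : Fˣ)) = l * cc h := by
      simp only [cc]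
      rw [hgc, h2, h4, rho_add]
      simp only [mul_inv, Units.val_inv_eq_inv_val, inv_inv]
      ring
    rw [Lam, Lam, e3, map_mul]
    simp

lemma AA_vanish {χ : MulChar F ℂ} {ψ : AddChar F ℂ} (h : χ ≠ 1 ∨ ψ ≠ 1) {U : F} (hU : U ≠ 0) (V : F)
    {k : ℕ} (hk : 5 ≤ k) : AA χ ψ U V k = 0 := by
  by_cases hψ : ψ = 1
  · subst hψ
    exact AA_vanish_chi (h.resolve_right (by simp)) U V (by omega)
  · exact AA_vanish_psi hψ hU V hk

lemma AA_zero (χ : MulChar F ℂ) (ψ : AddChar F ℂ) (U V : F) : AA χ ψ U V 0 = 1 := by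
  have : Mon F 0 = {1} := by
    ext h
    rw [mem_Mon, Finset.mem_singleton]
    constructor
    · rintro ⟨h1, h2⟩; exact eq_one_of_monic_natDegree_zero h1 h2
    · rintro rfl; simp
  rw [AA, this, Finset.sum_singleton, Lam_one]
end

lemma AA_one {F : Type*} [Field F] [Fintype F] (χ : MulChar F ℂ) (ψ : AddChar F ℂ) (U V : F) :
    AA χ ψ U V 1 = ∑ x : F, χ (x + x⁻¹) * ψ (U * x + V * x⁻¹) := by
  rw [AA]
  symm
  refine Finset.sum_bij (fun x _ => X - C x) ?_ ?_ ?_ ?_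
  · intro x _; rw [mem_Mon]; exact ⟨monic_X_sub_C x, natDegree_X_sub_C x⟩
  · intro x _ y _ h
    simpa using h
  · intro h hh
    obtain ⟨h1, h2⟩ := mem_Mon.mp hh
    refine ⟨-h.coeff 0, Finset.mem_univ _, ?_⟩
    rw [C_neg, sub_neg_eq_add]
    exact (h1.eq_X_add_C h2).symm
  · intro x _; rw [Lam_X_sub_C]


lemma poly_tail_zero (B : ℂ[X]) (G : PowerSeries ℂ) (z : ℂ)
    (hB : (B : PowerSeries ℂ) = ((X - C z : ℂ[X]) : PowerSeries ℂ) * G)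
    (hG : Filter.Tendsto (fun n => z ^ n * PowerSeries.coeff n G) Filter.atTop (nhds 0)) :
    B.eval z = 0 := by
  have h0 : B.coeff 0 = - z * PowerSeries.coeff 0 G := by
    rw [← Polynomial.coeff_coe, hB]
    simp [sub_mul]
  have h1 : ∀ n, B.coeff (n + 1) = PowerSeries.coeff n G - z * PowerSeries.coeff (n + 1) G := by
    intro n
    rw [← Polynomial.coeff_coe, hB]
    simp [sub_mul, PowerSeries.coeff_succ_X_mul]
  have h2 : ∀ n, ∑ i ∈ Finset.range (n + 1), B.coeff i * z ^ i =
      - z * (z ^ n * PowerSeries.coeff n G) := by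
    intro n
    induction n with
    | zero => simp [h0]
    | succ n ih => rw [Finset.sum_range_succ, ih, h1]; ring
  have h3 : ∀ n, B.natDegree ≤ n → B.eval z = - z * (z ^ n * PowerSeries.coeff n G) := by
    intro n hn
    rw [← h2, eval_eq_sum_range' (Nat.lt_succ_of_le hn)]
  have h4 : Filter.Tendsto (fun _ : ℕ => B.eval z) Filter.atTop (nhds (- z * 0)) := by
    refine (hG.const_mul (-z)).congr' ?_
    filter_upwards [Filter.eventually_ge_atTop B.natDegree] with n hn
    rw [h3 n hn]
  rw [mul_zero] at h4
  exact tendsto_nhds_unique tendsto_const_nhds h4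

lemma tail_tendsto (N : ℂ[X]) (e : PowerSeries ℂ) (z : ℂ) {C0 ρ : ℝ} (hρ : 0 < ρ)
    (he : ∀ n, ‖PowerSeries.coeff n e‖ ≤ C0 * ρ ^ n) (hz : ‖z‖ * ρ < 1) :
    Filter.Tendsto (fun n => z ^ n * PowerSeries.coeff n ((N : PowerSeries ℂ) * e))
      Filter.atTop (nhds 0) := by
  induction N using Polynomial.induction_on' with
  | add p q hp hq =>
    have := hp.add hq
    rw [add_zero] at this
    refine this.congr fun n => ?_
    simp only [Polynomial.coe_add, add_mul, map_add, mul_add]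
  | monomial k a =>
    have hC : 0 ≤ C0 := by simpa using (norm_nonneg _).trans (he 0)
    have h0 : Filter.Tendsto (fun n => (‖a‖ * C0 * (ρ ^ k)⁻¹) * (‖z‖ * ρ) ^ n) Filter.atTop (nhds 0) := by
      have := (tendsto_pow_atTop_nhds_zero_of_lt_one (by positivity) hz).const_mul (‖a‖ * C0 * (ρ ^ k)⁻¹)
      rwa [mul_zero] at this
    refine squeeze_zero_norm (fun n => ?_) h0
    have hm : ((monomial k a : ℂ[X]) : PowerSeries ℂ) * e = PowerSeries.C a * (PowerSeries.X ^ k * e) := by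
      rw [← C_mul_X_pow_eq_monomial, Polynomial.coe_mul, Polynomial.coe_C, Polynomial.coe_pow,
        Polynomial.coe_X, mul_assoc]
    rw [hm, PowerSeries.coeff_C_mul, norm_mul, norm_mul, norm_pow, PowerSeries.coeff_X_pow_mul']
    split_ifs with h
    · have h5 : ‖PowerSeries.coeff (n - k) e‖ ≤ C0 * (ρ ^ n * (ρ ^ k)⁻¹) := by
        refine (he _).trans_eq ?_
        rw [pow_sub₀ _ hρ.ne' h]
      calc ‖z‖ ^ n * (‖a‖ * ‖PowerSeries.coeff (n - k) e‖)
          ≤ ‖z‖ ^ n * (‖a‖ * (C0 * (ρ ^ n * (ρ ^ k)⁻¹))) := by gcongr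
        _ = _ := by rw [mul_pow]; ring
    · simp; positivity

lemma coeff_X_mul_der (p : ℂ[X]) (n : ℕ) : (X * derivative p).coeff n = n * p.coeff n := by
  cases n with
  | zero => simp
  | succ n => rw [coeff_X_mul, coeff_derivative]; push_cast; ring

lemma roots_large (M : ℂ[X]) (e : PowerSeries ℂ) (z : ℂ) {C0 ρ : ℝ} (hρ : 0 < ρ)
    (he : ∀ n, ‖PowerSeries.coeff n e‖ ≤ C0 * ρ ^ n) (h0 : M.coeff 0 ≠ 0)
    (hM : ((X * derivative M : ℂ[X]) : PowerSeries ℂ) = M * e) (hz : M.eval z = 0) :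
    1 ≤ ‖z‖ * ρ := by
  by_contra! hlt
  have hM0 : M ≠ 0 := by rintro rfl; simp at h0
  have hz0 : z ≠ 0 := by
    rintro rfl
    exact h0 (by rwa [coeff_zero_eq_eval_zero])
  obtain ⟨N, hN, hnd⟩ := exists_eq_pow_rootMultiplicity_mul_and_not_dvd M hM0 z
  have hk : 0 < M.rootMultiplicity z := (rootMultiplicity_pos hM0).mpr hz
  obtain ⟨k, hk⟩ : ∃ k, M.rootMultiplicity z = k + 1 := ⟨_, (Nat.sub_add_cancel hk).symm⟩
  rw [hk] at hN
  have hder : X * derivative M = (X - C z) ^ k *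
      ((k + 1 : ℂ[X]) * X * N + X * (X - C z) * derivative N) := by
    rw [hN, derivative_mul, derivative_pow]
    simp
    ring
  have hB := hM
  rw [hder, hN, Polynomial.coe_mul, Polynomial.coe_mul, pow_succ, Polynomial.coe_mul] at hB
  have hne : (((X - C z) ^ k : ℂ[X]) : PowerSeries ℂ) ≠ 0 := by
    rw [Ne, Polynomial.coe_eq_zero_iff]
    exact pow_ne_zero _ (X_sub_C_ne_zero z)
  rw [mul_assoc (((X - C z) ^ k : ℂ[X]) : PowerSeries ℂ), mul_assoc (((X - C z) ^ k : ℂ[X]) : PowerSeries ℂ),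
    mul_assoc ((X - C z : ℂ[X]) : PowerSeries ℂ)] at hB
  have hB2 := mul_left_cancel₀ hne hB
  have := poly_tail_zero _ _ z hB2 (tail_tendsto N e z hρ he hlt)
  simp at this
  rcases this with (h | h) | h
  · exact Nat.cast_add_one_ne_zero k h
  · exact hz0 h
  · exact hnd (dvd_iff_isRoot.mpr h)

lemma newton_bound (A S : ℕ → ℂ) {C0 ρ : ℝ} (hρ : 0 < ρ) (hA0 : A 0 = 1) (hA : ∀ k, 5 ≤ k → A k = 0)
    (hN : ∀ k : ℕ, k * A k = ∑ ij ∈ Finset.HasAntidiagonal.antidiagonal k, A ij.1 * S ij.2)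
    (hS : ∀ m, ‖S (2 * m)‖ ≤ C0 * ρ ^ (2 * m)) : ‖A 1‖ ≤ 4 * ρ := by
  have hC0 : 0 ≤ C0 := by simpa using (norm_nonneg _).trans (hS 0)
  let L : ℂ[X] := ∑ k ∈ Finset.range 5, monomial k (A k)
  let L' : ℂ[X] := ∑ k ∈ Finset.range 5, monomial k ((-1) ^ k * A k)
  have hL : ∀ n, L.coeff n = A n := by
    intro n
    simp only [L, finsetSum_coeff, coeff_monomial]
    rw [Finset.sum_ite_eq']
    split_ifs with h
    · rfl
    · rw [hA]; simpa using h
  have hL' : ∀ n, L'.coeff n = (-1) ^ n * A n := by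
    intro n
    simp only [L', finsetSum_coeff, coeff_monomial]
    rw [Finset.sum_ite_eq']
    split_ifs with h
    · rfl
    · rw [hA, mul_zero]; simpa using h
  let s : PowerSeries ℂ := PowerSeries.mk S
  let s' : PowerSeries ℂ := PowerSeries.mk fun n => (-1) ^ n * S n
  have e1 : ((X * derivative L : ℂ[X]) : PowerSeries ℂ) = L * s := by
    ext n
    rw [Polynomial.coeff_coe, coeff_X_mul_der, PowerSeries.coeff_mul, hL, hN]
    simp [hL, s]
  have e2 : ((X * derivative L' : ℂ[X]) : PowerSeries ℂ) = L' * s' := by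
    ext n
    rw [Polynomial.coeff_coe, coeff_X_mul_der, PowerSeries.coeff_mul, hL', mul_left_comm, hN,
      Finset.mul_sum]
    refine Finset.sum_congr rfl fun ij hij => ?_
    rw [← Finset.HasAntidiagonal.mem_antidiagonal.mp hij]
    simp [hL', s', pow_add]
    ring
  have e3 : ((X * derivative (L * L') : ℂ[X]) : PowerSeries ℂ) =
      ((L * L' : ℂ[X]) : PowerSeries ℂ) * (s + s') := by
    have : X * derivative (L * L') = (X * derivative L) * L' + L * (X * derivative L') := by
      rw [derivative_mul]; ring
    rw [this, Polynomial.coe_add, Polynomial.coe_mul, e1, Polynomial.coe_mul, e2, Polynomial.coe_mul]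
    ring
  have hroot : ∀ z, L.eval z = 0 → 1 ≤ ‖z‖ * ρ := by
    intro z hz
    refine roots_large (L * L') (s + s') z (C0 := 2 * C0) hρ ?_ ?_ e3 (by rw [eval_mul, hz, zero_mul])
    · intro n
      simp only [map_add, s, s', PowerSeries.coeff_mk]
      rcases Nat.even_or_odd n with h | h
      · obtain ⟨m, rfl⟩ := h
        rw [← two_mul, pow_mul]
        simp only [even_two, Even.neg_pow, one_pow, one_mul]
        have := norm_add_le (S (2 * m)) (S (2 * m))
        have h3 := hS m
        rw [pow_mul] at h3 ⊢
        linarith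
      · rw [h.neg_one_pow]
        simp
        positivity
    · rw [mul_coeff_zero, hL, hL', hA0]; simp
  have hL0 : L ≠ 0 := by
    intro h
    have := hL 0
    rw [h, hA0] at this
    simp at this
  have hdeg : L.natDegree ≤ 4 := by
    rw [natDegree_le_iff_coeff_eq_zero]
    intro n hn
    rw [hL, hA n hn]
  have hev0 : L.eval 0 = 1 := by rw [← coeff_zero_eq_eval_zero, hL, hA0]
  have hd0 : (derivative L).eval 0 = A 1 := by
    rw [← coeff_zero_eq_eval_zero, coeff_derivative]
    simp [hL]
  have hsp : L.Splits := IsAlgClosed.splits L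
  have key := hsp.eval_derivative_div_eval_of_ne_zero (x := 0) (by rw [hev0]; exact one_ne_zero)
  rw [hd0, hev0, div_one] at key
  have hb : ∀ m : Multiset ℂ, (∀ z ∈ m, 1 ≤ ‖z‖ * ρ) →
      ‖(m.map fun z => 1 / (0 - z)).sum‖ ≤ m.card * ρ := by
    intro m
    induction m using Multiset.induction_on with
    | empty => intro _; simp
    | cons w m ih =>
      intro h
      rw [Multiset.map_cons, Multiset.sum_cons, Multiset.card_cons]
      have h1 := ih fun z hz => h z (Multiset.mem_cons_of_mem hz)
      have h2 := h w (Multiset.mem_cons_self w m)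
      have hw : 0 < ‖w‖ := by
        rcases (norm_nonneg w).lt_or_eq with h3 | h3
        · exact h3
        · rw [← h3] at h2; norm_num at h2
      have h3 : ‖(1 : ℂ) / (0 - w)‖ ≤ ρ := by
        rw [zero_sub, norm_div, norm_neg, norm_one, div_le_iff₀ hw]
        linarith
      refine (norm_add_le _ _).trans ?_
      push_cast
      linarith
  have h6 := hb L.roots fun z hz => hroot z (mem_roots hL0 |>.mp hz)
  have h7 : (L.roots.card : ℝ) ≤ 4 := by exact_mod_cast (card_roots' L).trans hdeg
  rw [key]
  exact h6.trans (by gcongr)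


theorem weil_W {F : Type*} [Field F] [Fintype F] {χ : MulChar F ℂ} {ψ : AddChar F ℂ}
    (h : χ ≠ 1 ∨ ψ ≠ 1) {U : F} (hU : U ≠ 0) (V : F) :
    ‖∑ x : F, χ (x + x⁻¹) * ψ (U * x + V * x⁻¹)‖ ≤ 4 * Real.sqrt (Fintype.card F) := by
  obtain ⟨p, hp⟩ := CharP.exists F
  have : Fact p.Prime := ⟨CharP.char_is_prime F p⟩
  rw [← AA_one]
  let S : ℕ → ℂ := fun k => match k with
    | 0 => 0
    | i + 1 => SK F (FiniteField.Extension F p (i + 1)) χ ψ U V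
  have hQ : (0 : ℝ) < Fintype.card F := by exact_mod_cast Fintype.card_pos
  refine newton_bound (AA χ ψ U V) S (C0 := cQ (Fintype.card F) + 3 + (Fintype.card F) ^ 2)
    (Real.sqrt_pos.mpr hQ) (AA_zero _ _ _ _) (fun k hk => AA_vanish h hU V hk) ?_ ?_
  · intro k
    rw [newton p, ← Finset.Nat.sum_antidiagonal_swap,
      Finset.Nat.sum_antidiagonal_eq_sum_range_succ_mk, Finset.sum_range_succ']
    simp only [Prod.fst_swap, Prod.snd_swap, S, mul_zero, add_zero]
    exact Finset.sum_congr rfl fun i _ => mul_comm _ _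
  · intro m
    rw [pow_mul, Real.sq_sqrt hQ.le]
    rcases m with _ | m
    · simp [S]
      positivity
    · have : 2 * (m + 1) = (2 * m + 1) + 1 := by ring
      rw [this]
      refine SK_even_bound h rfl ?_ hU V
      rw [FiniteField.finrank_extension]
      ring


lemma exists_free_coeffs {E : Type*} [Field E] [Fintype E] [Fintype (MulChar E ℂ)] (S : Finset ℕ)
    (hS : ∀ p ∈ S, p.Prime ∧ p ∣ Fintype.card E - 1) :
    ∃ c : MulChar E ℂ → ℂ, c 1 = ((∏ p ∈ S, (1 - (p : ℝ)⁻¹) : ℝ) : ℂ) ∧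
      ∑ χ, ‖c χ‖ ≤ (∏ p ∈ S, (1 - (p : ℝ)⁻¹)) * 2 ^ S.card ∧
      (∀ χ, c χ ≠ 0 → χ ^ (∏ p ∈ S, p) = 1) ∧
      ∀ y : E, y ≠ 0 → (∑ χ, c χ * χ y = 0 ∨
        (∑ χ, c χ * χ y = 1 ∧ ∀ p ∈ S, ¬ ∃ β : E, β ^ p = y)) := by
  classical
  induction S using Finset.induction_on with
  | empty =>
    refine ⟨fun χ => if χ = 1 then 1 else 0, by simp, ?_, ?_, ?_⟩
    · simp [apply_ite norm]
    · intro χ; simp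
    · intro y hy
      right
      simp [MulChar.one_apply hy.isUnit]
  | insert p S hpS ih =>
    obtain ⟨c, hc1, hcs, hct, hcy⟩ := ih fun r hr => hS r (Finset.mem_insert_of_mem hr)
    obtain ⟨hp, hpd⟩ := hS p (Finset.mem_insert_self p S)
    have hp0 : (p : ℝ) ≠ 0 := by exact_mod_cast hp.ne_zero
    have hp0' : (p : ℂ) ≠ 0 := by exact_mod_cast hp.ne_zero
    obtain ⟨η, hη⟩ := MulChar.exists_mulChar_orderOf E hpd (Complex.isPrimitiveRoot_exp p hp.ne_zero)
    set t : ℝ := ∏ r ∈ S, (1 - (r : ℝ)⁻¹) with ht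
    let c' : MulChar E ℂ → ℂ := fun χ => (1 - (p : ℂ)⁻¹) * c χ -
      (p : ℂ)⁻¹ * ∑ j ∈ Finset.range (p - 1), c (χ * (η ^ (j + 1))⁻¹)
    have hcop : (∏ r ∈ S, r).Coprime p := by
      refine Nat.Coprime.prod_left fun r hr => ?_
      refine (Nat.coprime_primes (hS r (Finset.mem_insert_of_mem hr)).1 hp).mpr ?_
      rintro rfl; exact hpS hr
    have hηp : η ^ p = 1 := by rw [← hη]; exact pow_orderOf_eq_one η
    have hp1 : 1 ≤ p := hp.one_le
    have hpinv : (p : ℝ)⁻¹ ≤ 1 := inv_le_one_of_one_le₀ (by exact_mod_cast hp1)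
    refine ⟨c', ?_, ?_, ?_, ?_⟩
    · have : ∑ j ∈ Finset.range (p - 1), c (1 * (η ^ (j + 1))⁻¹) = 0 := by
        refine Finset.sum_eq_zero fun j hj => ?_
        by_contra h
        have h1 := hct _ h
        rw [one_mul, inv_pow, inv_eq_one] at h1
        have h2 : (η ^ (j + 1)) ^ p = 1 := by rw [← pow_mul, mul_comm, pow_mul, hηp, one_pow]
        have h3 := orderOf_dvd_of_pow_eq_one h1
        have h4 := orderOf_dvd_of_pow_eq_one h2
        have h5 := Nat.dvd_gcd h3 h4
        rw [hcop, Nat.dvd_one, orderOf_eq_one_iff] at h5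
        have h6 := orderOf_dvd_of_pow_eq_one h5
        rw [hη] at h6
        have h7 := Nat.le_of_dvd (Nat.succ_pos j) h6
        rw [Finset.mem_range] at hj
        omega
      rw [Finset.prod_insert hpS, ← ht]
      simp only [c', this, hc1]
      push_cast
      ring
    · have h1 : ∀ χ, ‖c' χ‖ ≤ (1 - (p : ℝ)⁻¹) * ‖c χ‖ +
          (p : ℝ)⁻¹ * ∑ j ∈ Finset.range (p - 1), ‖c (χ * (η ^ (j + 1))⁻¹)‖ := by
        intro χ
        refine (norm_sub_le _ _).trans ?_
        rw [norm_mul, norm_mul]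
        have e1 : ‖(1 - (p : ℂ)⁻¹)‖ = 1 - (p : ℝ)⁻¹ := by
          have : (1 - (p : ℂ)⁻¹) = ((1 - (p : ℝ)⁻¹ : ℝ) : ℂ) := by push_cast; ring
          rw [this, Complex.norm_real, Real.norm_of_nonneg (by linarith)]
        have e2 : ‖(p : ℂ)⁻¹‖ = (p : ℝ)⁻¹ := by simp
        rw [e1, e2]
        gcongr
        exact norm_sum_le _ _
      refine (Finset.sum_le_sum fun χ _ => h1 χ).trans ?_
      rw [Finset.sum_add_distrib, ← Finset.mul_sum, ← Finset.mul_sum, Finset.sum_comm]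
      have h2 : ∀ j, ∑ χ, ‖c (χ * (η ^ (j + 1))⁻¹)‖ = ∑ χ, ‖c χ‖ := fun j =>
        Fintype.sum_equiv (Equiv.mulRight (η ^ (j + 1))⁻¹) _ _ fun χ => rfl
      simp only [h2, Finset.sum_const, Finset.card_range, nsmul_eq_mul]
      rw [Nat.cast_sub hp1, Finset.prod_insert hpS, Finset.card_insert_of_notMem hpS, pow_succ]
      have h3 : (p : ℝ)⁻¹ * (((p : ℝ) - ((1 : ℕ) : ℝ)) * ∑ χ, ‖c χ‖) = (1 - (p : ℝ)⁻¹) * ∑ χ, ‖c χ‖ := by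
        field_simp
        push_cast
        ring
      rw [h3]
      have := mul_le_mul_of_nonneg_left hcs (by linarith : 0 ≤ 1 - (p : ℝ)⁻¹)
      nlinarith
    · intro χ h
      rw [Finset.prod_insert hpS]
      by_cases hχ : c χ = 0
      · have : ∃ j ∈ Finset.range (p - 1), c (χ * (η ^ (j + 1))⁻¹) ≠ 0 := by
          by_contra! h0
          exact h (by simp only [c', hχ, Finset.sum_eq_zero h0]; ring)
        obtain ⟨j, _, hj⟩ := this
        have h1 := hct _ hj
        have h2 : χ = (χ * (η ^ (j + 1))⁻¹) * η ^ (j + 1) := by rw [inv_mul_cancel_right]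
        have h3 : (η ^ (j + 1)) ^ p = 1 := by rw [← pow_mul, mul_comm, pow_mul, hηp, one_pow]
        rw [h2, mul_pow, mul_comm p, pow_mul (χ * (η ^ (j + 1))⁻¹), h1, one_pow, one_mul,
          mul_comm, pow_mul, h3, one_pow]
      · rw [mul_comm, pow_mul, hct χ hχ, one_pow]
    · intro y hy
      have e1 : ∑ χ, c' χ * χ y = (∑ χ, c χ * χ y) *
          (1 - (p : ℂ)⁻¹ * ∑ j ∈ Finset.range p, η y ^ j) := by
        have h2 : ∀ j, ∑ χ, c (χ * (η ^ (j + 1))⁻¹) * χ y = (∑ χ, c χ * χ y) * η y ^ (j + 1) := by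
          intro j
          rw [Finset.sum_mul]
          refine Fintype.sum_equiv (Equiv.mulRight (η ^ (j + 1))⁻¹) _ _ fun χ => ?_
          rw [Equiv.coe_mulRight, mul_assoc, ← MulChar.pow_apply' η (Nat.succ_ne_zero j), ← MulChar.mul_apply,
            inv_mul_cancel_right]
        obtain ⟨r, rfl⟩ : ∃ r, p = r + 1 := ⟨p - 1, by omega⟩
        rw [Finset.sum_range_succ']
        simp only [c', sub_mul, Finset.sum_sub_distrib]
        have h3 : ∑ χ : MulChar E ℂ, (((r + 1 : ℕ) : ℂ)⁻¹ *
            ∑ j ∈ Finset.range (r + 1 - 1), c (χ * (η ^ (j + 1))⁻¹)) * χ y =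
            ((r + 1 : ℕ) : ℂ)⁻¹ * ((∑ χ, c χ * χ y) * ∑ j ∈ Finset.range r, η y ^ (j + 1)) := by
          rw [Finset.mul_sum (Finset.range r)]
          simp_rw [← h2]
          rw [Finset.sum_comm, Finset.mul_sum]
          refine Finset.sum_congr rfl fun χ _ => ?_
          rw [mul_assoc, Finset.sum_mul, Nat.add_sub_cancel]
        rw [h3]
        simp only [mul_assoc, one_mul, Finset.sum_sub_distrib, ← Finset.mul_sum]
        ring
      have hpw : η y ^ p = 1 := by
        rw [← MulChar.pow_apply' η hp.ne_zero, hηp, MulChar.one_apply hy.isUnit]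
      by_cases hηy : η y = 1
      · left
        rw [e1, hηy]
        simp [hp0']
      · have hg : ∑ j ∈ Finset.range p, η y ^ j = 0 := by
          have := geom_sum_mul (η y) p
          rw [hpw, sub_self] at this
          exact (mul_eq_zero.mp this).resolve_right (sub_ne_zero.mpr hηy)
        rw [e1, hg, mul_zero, sub_zero, mul_one]
        rcases hcy y hy with h | ⟨h, h'⟩
        · exact Or.inl h
        · refine Or.inr ⟨h, fun r hr => ?_⟩
          rcases Finset.mem_insert.mp hr with rfl | hr
          · rintro ⟨β, rfl⟩
            apply hηy
            rw [← hpw, map_pow]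
            have hβ : β ≠ 0 := by rintro rfl; exact hy (zero_pow hp.ne_zero)
            have : η β ^ r = 1 := by
              rw [← MulChar.pow_apply' η hp.ne_zero, hηp, MulChar.one_apply hβ.isUnit]
            rw [this, one_pow]
          · exact h' r hr


section
variable {F E : Type*} [Field F] [Fintype F] [Field E] [Fintype E] [Algebra F E]

/-- The sums over the whole field with trace twists. -/
noncomputable def TT (ψ0 : AddChar F ℂ) (χ : MulChar E ℂ) (u v : F) : ℂ :=
  ∑ x : E, χ (x + x⁻¹) * ψ0 (Algebra.trace F E (u • x + v • x⁻¹))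

lemma TT_bound {ψ0 : AddChar F ℂ} (hψ0 : ψ0 ≠ 1) (χ : MulChar E ℂ) (u v : F)
    (h : χ ≠ 1 ∨ u ≠ 0 ∨ v ≠ 0) : ‖TT ψ0 χ u v‖ ≤ 4 * Real.sqrt (Fintype.card E) := by
  have : Module.Finite F E := Module.Finite.of_finite
  let ψ : AddChar E ℂ := ψ0.compAddMonoidHom (Algebra.trace F E).toAddMonoidHom
  have hψ : ψ ≠ 1 := by
    obtain ⟨c, hc⟩ := AddChar.ne_one_iff.mp hψ0
    obtain ⟨x, rfl⟩ := Algebra.trace_surjective F E c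
    exact AddChar.ne_one_iff.mpr ⟨x, hc⟩
  have e : ∀ u v : F, TT ψ0 χ u v = ∑ x : E, χ (x + x⁻¹) *
      ψ (algebraMap F E u * x + algebraMap F E v * x⁻¹) := by
    intro u v
    refine Finset.sum_congr rfl fun x _ => ?_
    rw [Algebra.smul_def, Algebra.smul_def]
    rfl
  by_cases hu : u = 0
  · by_cases hv : v = 0
    · subst hu hv
      have hχ : χ ≠ 1 := by simpa using h
      have := weil_W (ψ := (1 : AddChar E ℂ)) (Or.inl hχ) (U := 1) one_ne_zero 0
      rw [e]
      simpa using this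
    · have hs : TT ψ0 χ u v = TT ψ0 χ v u := by
        refine Fintype.sum_equiv (Equiv.inv E) _ _ fun x => ?_
        rw [Equiv.inv_apply]
        rw [inv_inv, add_comm x⁻¹, add_comm (v • x⁻¹)]
      rw [hs, e]
      exact weil_W (Or.inr hψ) (by simpa using hv) _
  · rw [e]
    exact weil_W (Or.inr hψ) (by simpa using hu) _

open Classical in
/-- The sums over elements with prescribed traces. -/
noncomputable def HH (F : Type*) [Field F] [Algebra F E] (χ : MulChar E ℂ) (a b : F) : ℂ :=
  ∑ x : E with Algebra.trace F E x = a ∧ Algebra.trace F E x⁻¹ = b, χ (x + x⁻¹)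

lemma HH_eq {ψ0 : AddChar F ℂ} (hψ0 : ψ0.IsPrimitive) (χ : MulChar E ℂ) (a b : F) :
    (Fintype.card F : ℂ) ^ 2 * HH F χ a b =
      ∑ u : F, ∑ v : F, ψ0 (-(u * a + v * b)) * TT ψ0 χ u v := by
  classical
  have h1 : ∀ t : F, ∑ u : F, ψ0 (u * t) = if t = 0 then (Fintype.card F : ℂ) else 0 := by
    intro t
    have := AddChar.sum_mulShift t hψ0
    simpa using this
  have h2 : ∀ x : E, ∑ u : F, ∑ v : F, ψ0 (-(u * a + v * b)) *
      ψ0 (Algebra.trace F E (u • x + v • x⁻¹)) =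
      if Algebra.trace F E x = a ∧ Algebra.trace F E x⁻¹ = b then (Fintype.card F : ℂ) ^ 2 else 0 := by
    intro x
    have : ∀ u v : F, ψ0 (-(u * a + v * b)) * ψ0 (Algebra.trace F E (u • x + v • x⁻¹)) =
        ψ0 (u * (Algebra.trace F E x - a)) * ψ0 (v * (Algebra.trace F E x⁻¹ - b)) := by
      intro u v
      rw [← AddChar.map_add_eq_mul, ← AddChar.map_add_eq_mul, _root_.map_add (Algebra.trace F E), map_smul, map_smul, smul_eq_mul,
        smul_eq_mul]
      congr 1
      ring
    simp_rw [this]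
    rw [← Finset.sum_mul_sum, h1, h1]
    simp only [sub_eq_zero]
    split_ifs <;> simp_all [sq]
  rw [HH, Finset.sum_filter, Finset.mul_sum]
  have h3 : ∀ x : E, (Fintype.card F : ℂ) ^ 2 *
      (if Algebra.trace F E x = a ∧ Algebra.trace F E x⁻¹ = b then χ (x + x⁻¹) else 0) =
      ∑ u : F, ∑ v : F, ψ0 (-(u * a + v * b)) * (χ (x + x⁻¹) *
        ψ0 (Algebra.trace F E (u • x + v • x⁻¹))) := by
    intro x
    have h4 : ∀ u v : F, ψ0 (-(u * a + v * b)) * (χ (x + x⁻¹) *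
        ψ0 (Algebra.trace F E (u • x + v • x⁻¹))) = χ (x + x⁻¹) * (ψ0 (-(u * a + v * b)) *
        ψ0 (Algebra.trace F E (u • x + v • x⁻¹))) := fun u v => by ring
    simp_rw [h4, ← Finset.mul_sum]
    rw [h2]
    split_ifs
    · ring
    · simp
  simp_rw [h3]
  rw [Finset.sum_comm]
  refine Finset.sum_congr rfl fun u _ => ?_
  rw [Finset.sum_comm]
  refine Finset.sum_congr rfl fun v _ => ?_
  rw [TT, Finset.mul_sum]

lemma addChar_norm (ψ0 : AddChar F ℂ) (t : F) : ‖ψ0 t‖ = 1 := AddChar.norm_apply ψ0 t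

lemma HH_bound {χ : MulChar E ℂ} (hχ : χ ≠ 1) (a b : F) :
    ‖HH F χ a b‖ ≤ 4 * Real.sqrt (Fintype.card E) := by
  obtain ⟨ψ0, hψ0⟩ : ∃ ψ0 : AddChar F ℂ, ψ0.IsPrimitive :=
    ⟨_, AddChar.FiniteField.primitiveChar_to_Complex_isPrimitive F⟩
  have hne : ψ0 ≠ 1 := by simpa using hψ0 one_ne_zero
  have h := congrArg norm (HH_eq hψ0 χ a b)
  have hq : (0 : ℝ) < Fintype.card F := by exact_mod_cast Fintype.card_pos
  have h2 : ‖∑ u : F, ∑ v : F, ψ0 (-(u * a + v * b)) * TT ψ0 χ u v‖ ≤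
      ∑ u : F, ∑ v : F, 4 * Real.sqrt (Fintype.card E) := by
    refine norm_sum_le_of_le _ fun u _ => norm_sum_le_of_le _ fun v _ => ?_
    rw [norm_mul, addChar_norm, one_mul]
    exact TT_bound hne χ u v (Or.inl hχ)
  rw [← h, norm_mul, norm_pow, Complex.norm_natCast] at h2
  simp only [Finset.sum_const, Finset.card_univ, nsmul_eq_mul] at h2
  rw [← mul_assoc, ← sq] at h2
  exact le_of_mul_le_mul_left h2 (by positivity)

lemma HH_one_bound (a b : F) :
    ∃ r : ℝ, HH F (1 : MulChar E ℂ) a b = r ∧ (Fintype.card E : ℝ) / (Fintype.card F : ℝ) ^ 2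
      - 4 * Real.sqrt (Fintype.card E) ≤ r := by
  classical
  obtain ⟨ψ0, hψ0⟩ : ∃ ψ0 : AddChar F ℂ, ψ0.IsPrimitive :=
    ⟨_, AddChar.FiniteField.primitiveChar_to_Complex_isPrimitive F⟩
  have hne : ψ0 ≠ 1 := by simpa using hψ0 one_ne_zero
  have hq : (0 : ℝ) < Fintype.card F := by exact_mod_cast Fintype.card_pos
  have hone : ∀ y : E, (1 : MulChar E ℂ) y = ((if y = 0 then 0 else 1 : ℝ) : ℂ) := by
    intro y
    split_ifs with hy
    · rw [hy, MulChar.map_zero, Complex.ofReal_zero]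
    · simp [MulChar.one_apply (Ne.isUnit hy)]
  refine ⟨∑ x : E with Algebra.trace F E x = a ∧ Algebra.trace F E x⁻¹ = b,
    (if x + x⁻¹ = 0 then 0 else 1 : ℝ), ?_, ?_⟩
  · rw [HH, Complex.ofReal_sum]
    exact Finset.sum_congr (by congr) fun x _ => hone _
  set r : ℝ := ∑ x : E with Algebra.trace F E x = a ∧ Algebra.trace F E x⁻¹ = b,
    (if x + x⁻¹ = 0 then 0 else 1 : ℝ) with hr
  have hHH : HH F (1 : MulChar E ℂ) a b = r := by
    rw [HH, hr, Complex.ofReal_sum]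
    exact Finset.sum_congr (by congr) fun x _ => hone _
  have h := HH_eq hψ0 (1 : MulChar E ℂ) a b
  rw [hHH, ← Fintype.sum_prod_type', ← Finset.add_sum_erase _ _ (Finset.mem_univ (0, 0))] at h
  have hT : TT ψ0 (1 : MulChar E ℂ) (0 : F) 0 =
      ((∑ x : E, (if x + x⁻¹ = 0 then 0 else 1 : ℝ) : ℝ) : ℂ) := by
    rw [TT, Complex.ofReal_sum]
    exact Finset.sum_congr rfl fun x _ => by rw [hone]; simp
  have hT2 : (Fintype.card E : ℝ) - 3 ≤ ∑ x : E, (if x + x⁻¹ = 0 then 0 else 1 : ℝ) := by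
    have e1 : (Fintype.card E : ℝ) = ∑ x : E, (if x + x⁻¹ = 0 then 0 else 1 : ℝ) +
        (Finset.univ.filter fun x : E => x + x⁻¹ = 0).card := by
      rw [Finset.card_filter]
      push_cast
      rw [← Finset.sum_add_distrib, ← Finset.card_univ, Finset.card_eq_sum_ones]
      push_cast
      exact Finset.sum_congr rfl fun x _ => by split_ifs <;> simp
    have e2 : (Finset.univ.filter fun x : E => x + x⁻¹ = 0).card ≤ 3 := by
      let P : E[X] := X ^ 3 + X
      have hP : P.natDegree = 3 := by simp only [P]; compute_degree!
      have hP0 : P ≠ 0 := by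
        intro h0
        rw [h0] at hP
        simp at hP
      rw [← hP]
      refine (Finset.card_le_card ?_).trans (P.roots.toFinset_card_le.trans (card_roots' P))
      intro x hx
      rw [Finset.mem_filter] at hx
      rw [Multiset.mem_toFinset, mem_roots hP0, IsRoot.def]
      have hx2 := hx.2
      simp only [P, eval_add, eval_pow, eval_X]
      by_cases hx0 : x = 0
      · simp [hx0]
      · have : x ^ 3 + x = x ^ 2 * (x + x⁻¹) := by field_simp
        rw [this, hx2, mul_zero]
    have : ((Finset.univ.filter fun x : E => x + x⁻¹ = 0).card : ℝ) ≤ 3 := by exact_mod_cast e2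
    linarith
  set T : ℝ := ∑ x : E, (if x + x⁻¹ = 0 then 0 else 1 : ℝ) with hTd
  set s : ℝ := Real.sqrt (Fintype.card E) with hs
  have hs1 : 1 ≤ s := by
    rw [hs, Real.one_le_sqrt]
    exact_mod_cast Fintype.card_pos
  have hrem : ‖∑ p ∈ Finset.univ.erase ((0 : F), (0 : F)),
      ψ0 (-(p.1 * a + p.2 * b)) * TT ψ0 (1 : MulChar E ℂ) p.1 p.2‖ ≤
      ((Fintype.card F : ℝ) ^ 2 - 1) * (4 * s) := by
    refine (norm_sum_le_of_le (n := fun _ => 4 * s) _ fun p hp => ?_).trans ?_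
    · rw [norm_mul, addChar_norm, one_mul]
      refine TT_bound hne _ _ _ (Or.inr ?_)
      by_contra! h0
      exact (Finset.ne_of_mem_erase hp) (Prod.ext h0.1 h0.2)
    · rw [Finset.sum_const, Finset.card_erase_of_mem (Finset.mem_univ _), Finset.card_univ,
        Fintype.card_prod, nsmul_eq_mul, Nat.cast_sub (Nat.mul_pos Fintype.card_pos Fintype.card_pos)]
      push_cast
      rw [sq]
  simp only [zero_mul, add_zero, neg_zero, AddChar.map_zero_eq_one, one_mul] at h
  rw [hT] at h
  have h5 : (((Fintype.card F : ℝ) ^ 2 * r - T : ℝ) : ℂ) = ∑ p ∈ Finset.univ.erase ((0 : F), (0 : F)),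
      ψ0 (-(p.1 * a + p.2 * b)) * TT ψ0 (1 : MulChar E ℂ) p.1 p.2 := by
    push_cast
    rw [h]
    ring
  rw [← h5, Complex.norm_real, Real.norm_eq_abs] at hrem
  have h6 := (abs_le.mp hrem).1
  rw [sub_le_iff_le_add, div_le_iff₀ (by positivity)]
  nlinarith

end

lemma isFree_of_primes {E : Type*} [Field E] {e : ℕ} (he : e ≠ 0) {y : E}
    (h : ∀ p ∈ e.primeFactors, ¬ ∃ β : E, β ^ p = y) : IsFree e y := by
  rintro d hd ⟨β, rfl⟩
  by_contra hd1
  obtain ⟨p, hp, hpd⟩ := Nat.exists_prime_and_dvd hd1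
  obtain ⟨k, rfl⟩ := hpd
  refine h p (Nat.mem_primeFactors.mpr ⟨hp, (Dvd.intro k rfl).trans hd, he⟩) ⟨β ^ k, ?_⟩
  rw [← pow_mul, mul_comm]

lemma totient_div {e : ℕ} (he : e ≠ 0) :
    (e.totient : ℝ) / e = ∏ p ∈ e.primeFactors, (1 - (p : ℝ)⁻¹) := by
  have h := Nat.totient_eq_mul_prod_factors e
  have h2 : (e.totient : ℝ) = e * ∏ p ∈ e.primeFactors, (1 - (p : ℝ)⁻¹) := by
    have := congrArg (fun x : ℚ => (x : ℝ)) h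
    push_cast at this
    exact this
  rw [h2]
  field_simp

lemma main_bound {F E : Type*} [Field F] [Fintype F] [Field E] [Fintype E] [Algebra F E]
    (a b : F) {e : ℕ} (he : e ∣ Fintype.card E - 1) :
    ((e.totient : ℝ) / e) * ((Fintype.card E : ℝ) / (Fintype.card F : ℝ) ^ 2 -
      2 ^ e.primeFactors.card * (4 * Real.sqrt (Fintype.card E))) ≤ Ncount F E a b e := by
  classical
  have : Fintype (MulChar E ℂ) := Fintype.ofFinite _
  have hE1 : 1 < Fintype.card E := Fintype.one_lt_card
  have he0 : e ≠ 0 := by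
    rintro rfl
    rw [zero_dvd_iff] at he
    omega
  rw [totient_div he0]
  obtain ⟨c, hc1, hcs, -, hcy⟩ := exists_free_coeffs (E := E) e.primeFactors fun p hp =>
    ⟨Nat.prime_of_mem_primeFactors hp, (Nat.dvd_of_mem_primeFactors hp).trans he⟩
  set t : ℝ := ∏ p ∈ e.primeFactors, (1 - (p : ℝ)⁻¹) with ht
  have ht0 : 0 ≤ t := Finset.prod_nonneg fun p hp => by
    have : (1 : ℝ) ≤ p := by exact_mod_cast (Nat.prime_of_mem_primeFactors hp).one_le
    have := inv_le_one_of_one_le₀ this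
    linarith
  set s : ℝ := Real.sqrt (Fintype.card E) with hs
  have hs0 : 0 ≤ s := Real.sqrt_nonneg _
  let H : Finset E := Finset.univ.filter fun x : E =>
    Algebra.trace F E x = a ∧ Algebra.trace F E x⁻¹ = b
  have hN : Ncount F E a b e = (H.filter fun x => x ≠ 0 ∧ IsFree e (x + x⁻¹)).card := by
    rw [Ncount, Nat.card_eq_fintype_card, Fintype.card_subtype]
    congr 1
    ext x
    simp only [H, Finset.mem_filter, Finset.mem_univ, true_and]
    tauto
  -- pointwise comparison
  have hpt : ∀ x ∈ H, (∑ χ, c χ * χ (x + x⁻¹)).re ≤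
      if x ≠ 0 ∧ IsFree e (x + x⁻¹) then (1 : ℝ) else 0 := by
    intro x _
    by_cases hy : x + x⁻¹ = 0
    · have : ∑ χ : MulChar E ℂ, c χ * χ (x + x⁻¹) = 0 :=
        Finset.sum_eq_zero fun χ _ => by rw [hy, MulChar.map_zero, mul_zero]
      rw [this, Complex.zero_re]
      split_ifs <;> norm_num
    · rcases hcy _ hy with h | ⟨h, h'⟩
      · rw [h, Complex.zero_re]
        split_ifs <;> norm_num
      · have hx : x ≠ 0 := by rintro rfl; simp at hy
        rw [h, if_pos ⟨hx, isFree_of_primes he0 h'⟩, Complex.one_re]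
  have hsum : (∑ χ, c χ * HH F χ a b).re ≤ Ncount F E a b e := by
    have e1 : ∑ χ, c χ * HH F χ a b = ∑ x ∈ H, ∑ χ, c χ * χ (x + x⁻¹) := by
      rw [Finset.sum_comm]
      refine Finset.sum_congr rfl fun χ _ => ?_
      rw [HH, Finset.mul_sum]
    rw [e1, Complex.re_sum, hN, Finset.card_filter]
    push_cast
    exact Finset.sum_le_sum hpt
  obtain ⟨r, hr, hr2⟩ := HH_one_bound (E := E) a b
  rw [← Finset.add_sum_erase _ _ (Finset.mem_univ (1 : MulChar E ℂ)), hc1, hr, Complex.add_re,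
    ← Complex.ofReal_mul, Complex.ofReal_re] at hsum
  have hrest : ‖∑ χ ∈ Finset.univ.erase (1 : MulChar E ℂ), c χ * HH F χ a b‖ ≤
      (t * 2 ^ e.primeFactors.card - t) * (4 * s) := by
    refine (norm_sum_le_of_le (n := fun χ => ‖c χ‖ * (4 * s)) _ fun χ hχ => ?_).trans ?_
    · rw [norm_mul]
      exact mul_le_mul_of_nonneg_left (HH_bound (Finset.ne_of_mem_erase hχ) a b) (norm_nonneg _)
    · rw [← Finset.sum_mul]
      refine mul_le_mul_of_nonneg_right ?_ (by positivity)
      rw [← Finset.add_sum_erase _ _ (Finset.mem_univ (1 : MulChar E ℂ)), hc1, Complex.norm_real,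
        Real.norm_of_nonneg ht0] at hcs
      linarith
  have h7 := (abs_le.mp ((Complex.abs_re_le_norm _).trans hrest)).1
  have h8 := mul_le_mul_of_nonneg_left hr2 ht0
  rw [← hs] at h8
  linarith


end Helpers

/-- Lower bound for `N_e(a,b)`:
`N_e ≥ θ(e) q^(n/2) (q^(n/2-2) - 2^(ω(e)+2))` where `θ(e) = φ(e)/e`. -/
theorem stmt3 (q n : ℕ) (hq : IsPrimePow q) (hn : 0 < n)
    (F E : Type*) [Field F] [Fintype F] [Field E] [Fintype E] [Algebra F E]
    (hF : Fintype.card F = q) (hE : Fintype.card E = q ^ n)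
    (a b : F) (e : ℕ) (he : e ∣ q ^ n - 1) :
    (Ncount F E a b e : ℝ) ≥
      ((e.totient : ℝ) / e) * (q : ℝ) ^ ((n : ℝ) / 2) *
        ((q : ℝ) ^ ((n : ℝ) / 2 - 2) - 2 ^ (e.primeFactors.card + 2)) := by
  have h := main_bound (E := E) a b (e := e) (by rwa [hE])
  rw [hE, hF] at h
  have hq0 : (0 : ℝ) < q := by exact_mod_cast hq.pos
  have h1 : Real.sqrt ((q ^ n : ℕ) : ℝ) = (q : ℝ) ^ ((n : ℝ) / 2) := by
    rw [Nat.cast_pow, Real.sqrt_eq_rpow, ← Real.rpow_natCast, ← Real.rpow_mul hq0.le]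
    congr 1
    ring
  have h2 : (q : ℝ) ^ ((n : ℝ) / 2) * (q : ℝ) ^ ((n : ℝ) / 2 - 2) = ((q ^ n : ℕ) : ℝ) / (q : ℝ) ^ 2 := by
    rw [← Real.rpow_add hq0, Nat.cast_pow, ← Real.rpow_natCast, ← Real.rpow_natCast,
      ← Real.rpow_sub hq0]
    congr 1
    push_cast
    ring
  refine ge_iff_le.mpr (le_trans (le_of_eq ?_) h)
  rw [h1, mul_assoc, mul_sub, h2, pow_add]
  ring
end
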